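/- Let 𝓔 be a representation-finite quiver exceptional set of Q. Then there are finitely many compatible subsets C_1,…,C_r of Ψ(Q)_{≥−1} such that Cone(𝓔) = ⋃_{i=1}^r Cone(C_i). -/

import Mathlib

set_option autoImplicit false

noncomputable section

open scoped BigOperators

/-! Basic setup for representations of a quiver with vertex set `V`, arrow set `A`,
tail map `t` and head map `h`, over a field `K`. -/

variable (K : Type) [Field K]
variable {V A : Type} [Fintype V] [DecidableEq V] [Fintype A]

/-- The Euler form of the quiver `(V, A, t, h)`. -/
def eulerForm {R : Type} [CommRing R] (t h : A → V) (x y : V → R) : R :=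
  ∑ i, x i * y i - ∑ a, x (t a) * y (h a)

def natZ (x : V → ℕ) : V → ℤ := fun i => (x i : ℤ)
def intQ (x : V → ℤ) : V → ℚ := fun i => (x i : ℚ)
def natQ (x : V → ℕ) : V → ℚ := fun i => (x i : ℚ)

/-- The weight `⟨α,·⟩`. -/
def weightL (t h : A → V) (α : V → ℤ) : V → ℤ :=
  fun i => eulerForm t h α (fun j => if j = i then 1 else 0)

/-- The weight `−⟨·,α⟩`. -/
def weightR (t h : A → V) (α : V → ℤ) : V → ℤ :=
  fun i => - eulerForm t h (fun j => if j = i then 1 else 0) α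

/-- `IsPathFrom t h i p j` : the list of arrows `p` is a path from `i` to `j`. -/
def IsPathFrom (t h : A → V) : V → List A → V → Prop
  | i, [], j => i = j
  | i, a :: p, j => t a = i ∧ IsPathFrom t h (h a) p j

/-- The quiver has no (nontrivial) oriented cycles. -/
def Acyclic (t h : A → V) : Prop := ∀ (i : V) (p : List A), IsPathFrom t h i p i → p = []

/-- The dimension vector `γ_i` of the projective indecomposable at `i`:
`γ_i(j)` is the number of paths from `i` to `j`. -/
def gammaRoot (t h : A → V) (i : V) : V → ℕ :=
  fun j => Set.ncard {p : List A | IsPathFrom t h i p j}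

/-- A finite-dimensional representation of the quiver `(V, A, t, h)` over `K`. -/
structure QuivRep (K : Type) [Field K] (V A : Type) (t h : A → V) : Type 1 where
  sp : V → Type
  [inst1 : ∀ i, AddCommGroup (sp i)]
  [inst2 : ∀ i, Module K (sp i)]
  [inst3 : ∀ i, FiniteDimensional K (sp i)]
  map : ∀ a : A, sp (t a) →ₗ[K] sp (h a)

attribute [instance] QuivRep.inst1 QuivRep.inst2 QuivRep.inst3

namespace QuivRep

variable {K} {t h : A → V}

/-- The dimension vector of a representation. -/
def dimVec (X : QuivRep K V A t h) : V → ℕ := fun i => Module.finrank K (X.sp i)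

/-- A subrepresentation. -/
structure Sub (X : QuivRep K V A t h) where
  sub : ∀ i, Submodule K (X.sp i)
  le : ∀ a : A, ∀ x ∈ sub (t a), X.map a x ∈ sub (h a)

/-- The dimension vector of a subrepresentation. -/
def Sub.dimVec {X : QuivRep K V A t h} (U : Sub X) : V → ℕ :=
  fun i => Module.finrank K (U.sub i)

/-- The space `Hom_Q(X,Y)` of morphisms of representations, as a submodule of
`Π i, Hom_K(X(i),Y(i))`. -/
def homS (X Y : QuivRep K V A t h) : Submodule K (∀ i, X.sp i →ₗ[K] Y.sp i) where
  carrier := {φ | ∀ a : A, (φ (h a)).comp (X.map a) = (Y.map a).comp (φ (t a))}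
  zero_mem' := by intro a; simp
  add_mem' := by
    intro f g hf hg a
    simp only [Pi.add_apply, LinearMap.add_comp, LinearMap.comp_add, hf a, hg a]
  smul_mem' := by
    intro c f hf a
    simp only [Pi.smul_apply, LinearMap.smul_comp, LinearMap.comp_smul, hf a]

/-- The dimension of `Hom_Q(X,Y)`. -/
def homDim (X Y : QuivRep K V A t h) : ℕ := Module.finrank K (homS X Y)

/-- The map `d^X_Y` from Ringel's canonical exact sequence. -/
def dmap (X Y : QuivRep K V A t h) :
    (∀ i, X.sp i →ₗ[K] Y.sp i) →ₗ[K] (∀ a : A, X.sp (t a) →ₗ[K] Y.sp (h a)) where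
  toFun φ := fun a => (φ (h a)).comp (X.map a) - (Y.map a).comp (φ (t a))
  map_add' f g := by
    funext a
    simp only [Pi.add_apply, LinearMap.add_comp, LinearMap.comp_add]
    abel
  map_smul' c f := by
    funext a
    simp only [Pi.smul_apply, LinearMap.smul_comp, LinearMap.comp_smul, smul_sub,
      RingHom.id_apply]

/-- The dimension of `Ext^1_Q(X,Y)`, i.e. of the cokernel of `d^X_Y`. -/
def extDim (X Y : QuivRep K V A t h) : ℕ :=
  Module.finrank K ((∀ a : A, X.sp (t a) →ₗ[K] Y.sp (h a)) ⧸ LinearMap.range (dmap X Y))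

/-- A rigid representation: `Ext^1_Q(X,X) = 0`. -/
def IsRigid (X : QuivRep K V A t h) : Prop := extDim X X = 0

/-- A Schur representation: `End_Q(X) = K·id`. -/
def IsSchur (X : QuivRep K V A t h) : Prop := homDim X X = 1

/-- An exceptional representation: rigid and Schur. -/
def IsExceptional (X : QuivRep K V A t h) : Prop := IsRigid X ∧ IsSchur X

end QuivRep

/-- `β` is a real Schur root: the dimension vector of an exceptional representation. -/
def isRealSchurRoot (t h : A → V) (β : V → ℕ) : Prop :=
  ∃ X : QuivRep K V A t h, X.dimVec = β ∧ X.IsExceptional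

/-- `ext_Q(α,β)` : the generic (minimal) value of `dim Ext^1_Q` on pairs of
representations of dimension vectors `α`, `β`. -/
def extMin (t h : A → V) (α β : V → ℕ) : ℕ :=
  sInf {n | ∃ X Y : QuivRep K V A t h, X.dimVec = α ∧ Y.dimVec = β ∧ QuivRep.extDim X Y = n}

/-- `hom_Q(α,β)` : the generic (minimal) value of `dim Hom_Q`. -/
def homMin (t h : A → V) (α β : V → ℕ) : ℕ :=
  sInf {n | ∃ X Y : QuivRep K V A t h, X.dimVec = α ∧ Y.dimVec = β ∧ QuivRep.homDim X Y = n}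

/-- `β' ↪ β` : every representation of dimension vector `β` has a subrepresentation of
dimension vector `β'`. -/
def Embeds (t h : A → V) (β' β : V → ℕ) : Prop :=
  ∀ X : QuivRep K V A t h, X.dimVec = β → ∃ U : QuivRep.Sub X, U.dimVec = β'

/-- `σ`-semi-stability of a representation. -/
def IsSemistable {t h : A → V} (σ : V → ℤ) (X : QuivRep K V A t h) : Prop :=
  (∑ i, σ i * (X.dimVec i : ℤ)) = 0 ∧
  ∀ U : QuivRep.Sub X, (∑ i, σ i * (U.dimVec i : ℤ)) ≤ 0

/-- `σ`-stability of a representation. -/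
def IsStable {t h : A → V} (σ : V → ℤ) (X : QuivRep K V A t h) : Prop :=
  (∑ i, σ i * (X.dimVec i : ℤ)) = 0 ∧ X.dimVec ≠ (fun _ => 0) ∧
  ∀ U : QuivRep.Sub X, U.dimVec ≠ (fun _ => 0) → U.dimVec ≠ X.dimVec →
    (∑ i, σ i * (U.dimVec i : ℤ)) < 0

/-- Isomorphism of representations. -/
def RepIso {t h : A → V} (X Y : QuivRep K V A t h) : Prop :=
  ∃ e : ∀ i, X.sp i ≃ₗ[K] Y.sp i,
    ∀ (a : A) (x : X.sp (t a)), e (h a) (X.map a x) = Y.map a (e (t a) x)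

/-- A quiver exceptional sequence of dimension vectors. -/
def IsQES (t h : A → V) {l : ℕ} (b : Fin l → V → ℕ) : Prop :=
  (∀ j, isRealSchurRoot K t h (b j)) ∧
  ∀ i j : Fin l, i < j →
    homMin K t h (b i) (b j) = 0 ∧ extMin K t h (b i) (b j) = 0 ∧
      eulerForm t h (natZ (b j)) (natZ (b i)) ≤ 0

/-- The cone of nonnegative rational linear combinations of a finite set of integral
vectors. -/
def coneOf (C : Finset (V → ℤ)) : Set (V → ℚ) :=
  {x | ∃ lam : (V → ℤ) → ℚ, (∀ c, 0 ≤ lam c) ∧ x = ∑ c ∈ C, lam c • intQ c}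

/-- A compatible subset of the set `Ψ(Q)_{≥ -1}` of almost positive real Schur roots. -/
def IsCompatible (t h : A → V) (C : Finset (V → ℤ)) : Prop :=
  (∀ x ∈ C, (∃ β : V → ℕ, isRealSchurRoot K t h β ∧ x = natZ β) ∨
      (∃ i : V, x = fun j => -(gammaRoot t h i j : ℤ))) ∧
  (∀ x ∈ C, ∀ y ∈ C, x ≠ y →
    (∀ β₁ β₂ : V → ℕ, isRealSchurRoot K t h β₁ → isRealSchurRoot K t h β₂ →
      x = natZ β₁ → y = natZ β₂ → extMin K t h β₁ β₂ = 0) ∧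
    (∀ (β : V → ℕ) (i : V), isRealSchurRoot K t h β →
      x = natZ β → y = (fun j => -(gammaRoot t h i j : ℤ)) → β i = 0))

/-- The domain of semi-invariants `D(β) ⊆ ℚ^{Q_0}`. -/
def Dom (t h : A → V) (β : V → ℕ) : Set (V → ℚ) :=
  {x | eulerForm t h x (natQ β) = 0 ∧
    ∀ β' : V → ℕ, Embeds K t h β' β → eulerForm t h x (natQ β') ≤ 0}

/-- A quiver exceptional set: a subset of `Ψ(Q)_{≥ -1}` of the form
`{β_1,…,β_l, −γ_{i_{l+1}},…,−γ_{i_m}}` with `β_j(i_k) = 0` and whose real-Schur-root part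
can be ordered into a quiver exceptional sequence. -/
def IsQExcSet (t h : A → V) (E : Finset (V → ℤ)) : Prop :=
  ∃ (l m : ℕ) (b : Fin l → V → ℕ) (g : Fin m → V),
    Function.Injective b ∧ Function.Injective g ∧ IsQES K t h b ∧
    (∀ j k, b j (g k) = 0) ∧
    (E : Set (V → ℤ)) =
      (Set.range fun j => natZ (b j)) ∪
      (Set.range fun k => (fun v => -(gammaRoot t h (g k) v : ℤ)))


/-- The underlying graph of the quiver is connected. -/
def IsConnectedQuiver (t h : A → V) : Prop :=
  ∀ i j : V,
    Relation.ReflTransGen (fun u v => ∃ a, (t a = u ∧ h a = v) ∨ (t a = v ∧ h a = u)) i j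

/-- Morphisms of representations. -/
structure RepHom {K : Type} [Field K] {V A : Type} {t h : A → V}
    (X Y : QuivRep K V A t h) : Type where
  app : ∀ i, X.sp i →ₗ[K] Y.sp i
  comm : ∀ a : A, (app (h a)).comp (X.map a) = (Y.map a).comp (app (t a))

namespace RepHom

variable {K₀ : Type} [Field K₀] {t h : A → V}

/-- The identity morphism. -/
def idHom (X : QuivRep K₀ V A t h) : RepHom X X :=
  ⟨fun _ => LinearMap.id, fun a => by ext x; simp⟩

/-- Composition of morphisms. -/
def comp {X Y Z : QuivRep K₀ V A t h} (f : RepHom X Y) (g : RepHom Y Z) : RepHom X Z :=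
  ⟨fun i => (g.app i).comp (f.app i), fun a => by
    ext x
    have hf := LinearMap.congr_fun (f.comm a) x
    have hg := LinearMap.congr_fun (g.comm a) (f.app (t a) x)
    simp only [LinearMap.comp_apply] at hf hg ⊢
    rw [hf, hg]⟩

/-- Sum of morphisms. -/
def add {X Y : QuivRep K₀ V A t h} (f g : RepHom X Y) : RepHom X Y :=
  ⟨fun i => f.app i + g.app i, fun a => by
    simp only [LinearMap.add_comp, LinearMap.comp_add, f.comm a, g.comm a]⟩

/-- Scalar multiple of a morphism. -/
def smul {X Y : QuivRep K₀ V A t h} (c : K₀) (f : RepHom X Y) : RepHom X Y :=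
  ⟨fun i => c • f.app i, fun a => by
    simp only [LinearMap.smul_comp, LinearMap.comp_smul, f.comm a]⟩

end RepHom

/-- The number of arrows `i → j` in the Ext-quiver `Q(𝓔)` of a sequence of dimension
vectors: `−⟨β_i, β_j⟩` for `i ≠ j`. -/
def extMult (t h : A → V) {l : ℕ} (b : Fin l → V → ℕ) (i j : Fin l) : ℕ :=
  if i = j then 0 else (-(eulerForm t h (natZ (b i)) (natZ (b j)))).toNat

/-- The arrow set of the Ext-quiver `Q(𝓔)`. -/
abbrev ExtArrow (t h : A → V) {l : ℕ} (b : Fin l → V → ℕ) : Type :=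
  (i : Fin l) × (j : Fin l) × Fin (extMult t h b i j)

/-- The representation space `rep(Q,β)` as a product of matrix spaces. -/
abbrev RepSpace (t h : A → V) (β : V → ℕ) : Type :=
  ∀ a : A, Matrix (Fin (β (h a))) (Fin (β (t a))) K

/-- The (base-change) action of `GL(β)` on `rep(Q,β)`. -/
def glAct (t h : A → V) {β : V → ℕ}
    (g : ∀ i, Matrix.GeneralLinearGroup (Fin (β i)) K) (W : RepSpace K t h β) :
    RepSpace K t h β :=
  fun a => (g (h a) : Matrix (Fin (β (h a))) (Fin (β (h a))) K) * W a *
    (((g (t a))⁻¹ : Matrix.GeneralLinearGroup (Fin (β (t a))) K) :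
      Matrix (Fin (β (t a))) (Fin (β (t a))) K)

/-- A polynomial function on `rep(Q,β)`. -/
def IsPolyFun (t h : A → V) {β : V → ℕ} (f : RepSpace K t h β → K) : Prop :=
  ∃ P : MvPolynomial ((a : A) × (Fin (β (h a)) × Fin (β (t a)))) K,
    ∀ W, f W = MvPolynomial.eval (fun x => W x.1 x.2.1 x.2.2) P

/-- The weight space `SI(Q,β)_σ` of semi-invariant polynomial functions of weight `σ`. -/
def SIweight (t h : A → V) (β : V → ℕ) (σ : V → ℤ) :
    Submodule K (RepSpace K t h β → K) where
  carrier := {f | IsPolyFun K t h f ∧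
    ∀ (g : ∀ i, Matrix.GeneralLinearGroup (Fin (β i)) K) (W : RepSpace K t h β),
      f (glAct K t h g W) =
        (((∏ i, (Matrix.GeneralLinearGroup.det (g i)) ^ σ i : Kˣ) : K)) * f W}
  zero_mem' := by
    refine ⟨⟨0, by simp⟩, by simp⟩
  add_mem' := by
    rintro f g ⟨⟨P, hP⟩, hf⟩ ⟨⟨Q, hQ⟩, hg⟩
    refine ⟨⟨P + Q, fun W => ?_⟩, fun gg W => ?_⟩
    · simp [hP W, hQ W]
    · simp only [Pi.add_apply, hf gg W, hg gg W]; ring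
  smul_mem' := by
    rintro c f ⟨⟨P, hP⟩, hf⟩
    refine ⟨⟨MvPolynomial.C c * P, fun W => ?_⟩, fun gg W => ?_⟩
    · simp [hP W]
    · simp only [Pi.smul_apply, hf gg W, smul_eq_mul]; ring

/-- Entry of a matrix accessed through natural-number indices. -/
def entryN {m n : ℕ} (M : Matrix (Fin m) (Fin n) K) (r c : ℕ) : K :=
  if hr : r < m then (if hc : c < n then M ⟨r, hr⟩ ⟨c, hc⟩ else 0) else 0

/-- The matrix of the map `d^V_W` (with `V` of dimension vector `α` varying and `W` of
dimension vector `w` fixed), in the standard bases. -/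
def schofieldMatrix (t h : A → V) {α w : V → ℕ}
    (Vm : RepSpace K t h α) (W : RepSpace K t h w) :
    Matrix ((a : A) × (Fin (w (h a)) × Fin (α (t a)))) ((i : V) × (Fin (w i) × Fin (α i))) K :=
  fun r c =>
    (if c.1 = h r.1 ∧ (c.2.1 : ℕ) = (r.2.1 : ℕ) then
      entryN K (Vm r.1) (c.2.2 : ℕ) (r.2.2 : ℕ) else 0)
    - (if c.1 = t r.1 ∧ (c.2.2 : ℕ) = (r.2.2 : ℕ) then
      entryN K (W r.1) (r.2.1 : ℕ) (c.2.1 : ℕ) else 0)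

/-- The Schofield semi-invariant `c_W : rep(Q,α) → K`, `V ↦ det d^V_W` (defined when
`⟨α, dim W⟩ = 0`, i.e. when `d^V_W` is a square matrix). -/
def schofieldSI (t h : A → V) {α w : V → ℕ} (W : RepSpace K t h w)
    (Vm : RepSpace K t h α) : K :=
  if hc : Fintype.card ((i : V) × (Fin (w i) × Fin (α i))) =
      Fintype.card ((a : A) × (Fin (w (h a)) × Fin (α (t a)))) then
    ((schofieldMatrix K t h Vm W).submatrix (Fintype.equivOfCardEq hc) id).det
  else 0

/-- The representation of `Q` attached to a point of `rep(Q,β)`. -/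
def toRep (t h : A → V) {β : V → ℕ} (W : RepSpace K t h β) : QuivRep K V A t h where
  sp i := Fin (β i) → K
  map a := Matrix.mulVecLin (W a)

/-!
The exceptional representations `E j` with dimension vectors in the given quiver exceptional
sequence are pairwise Hom-orthogonal bricks. Hence the representations filtered by the `E j` form
a subcategory closed under kernels and extensions, on which the Euler form is the Tits form of the
Ext-quiver. When that form is positive definite, every indecomposable of the subcategory is
exceptional, and only finitely many roots occur as its dimension vectors.

A filtered representation with the fewest endomorphisms in its dimension vector has no extensions
between complementary summands, since a nonsplit one would have fewer endomorphisms; so it is rigid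
and the dimension vectors of its indecomposable summands are compatible real Schur roots. Thus
every natural combination of the `b j` is a sum of compatible roots. Clearing denominators and
adding the elements `-γ_i`, whose cone is left untouched, covers the cone of the exceptional set.
-/

namespace QuivRep

section Morphisms

variable {K : Type} [Field K] {V A : Type} {t h : A → V}
variable {W X Y Z : QuivRep K V A t h}

/-- Morphisms of representations, as elements of the space `homS X Y`, so that the linear
structure and `homDim` apply to them directly. -/
abbrev Hom (X Y : QuivRep K V A t h) : Type := homS X Y

instance : CoeFun (Hom X Y) fun _ => ∀ v, X.sp v →ₗ[K] Y.sp v := ⟨Subtype.val⟩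

namespace Hom

@[ext] theorem ext {f g : Hom X Y} (H : ∀ v x, f v x = g v x) : f = g :=
  Subtype.ext (funext fun v => LinearMap.ext (H v))

theorem congr_apply {f g : Hom X Y} (H : f = g) (v : V) (x : X.sp v) : f v x = g v x := by
  rw [H]

theorem naturality (f : Hom X Y) (a : A) (x : X.sp (t a)) :
    f (h a) (X.map a x) = Y.map a (f (t a) x) :=
  LinearMap.congr_fun (f.2 a) x

/-- A morphism from its components and their naturality on elements. -/
def ofNatural (f : ∀ v, X.sp v →ₗ[K] Y.sp v)
    (H : ∀ a x, f (h a) (X.map a x) = Y.map a (f (t a) x)) : Hom X Y :=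
  ⟨f, fun a => LinearMap.ext (H a)⟩

@[simp] theorem ofNatural_apply (f : ∀ v, X.sp v →ₗ[K] Y.sp v)
    (H : ∀ a x, f (h a) (X.map a x) = Y.map a (f (t a) x)) (v : V) (x : X.sp v) :
    ofNatural f H v x = f v x := rfl

theorem exists_apply_ne_zero {f : Hom X Y} (hf : f ≠ 0) : ∃ v x, f v x ≠ 0 := by
  contrapose! hf
  exact ext hf

/-- The identity morphism. -/
protected def id (X : QuivRep K V A t h) : Hom X X :=
  ofNatural (fun _ => LinearMap.id) fun _ _ => rfl

@[simp] theorem id_apply (v : V) (x : X.sp v) : Hom.id X v x = x := rfl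

/-- Composition of morphisms, `g` after `f`. -/
def comp (g : Hom Y Z) (f : Hom X Y) : Hom X Z :=
  ofNatural (fun v => g v ∘ₗ f v) fun a x => by
    simp only [LinearMap.comp_apply, naturality]

notation:80 g:81 " ⊚ " f:80 => QuivRep.Hom.comp g f

@[simp] theorem comp_apply (g : Hom Y Z) (f : Hom X Y) (v : V) (x : X.sp v) :
    (g ⊚ f) v x = g v (f v x) := rfl

/-- Vertexwise injectivity, i.e. `f` is a monomorphism. -/
def Injective (f : Hom X Y) : Prop := ∀ v, Function.Injective (f v)

/-- Vertexwise surjectivity, i.e. `f` is an epimorphism. -/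
def Surjective (f : Hom X Y) : Prop := ∀ v, Function.Surjective (f v)

theorem injective_of_apply_eq_zero {f : Hom X Y} (H : ∀ v x, f v x = 0 → x = 0) :
    f.Injective := fun v => (injective_iff_map_eq_zero (f v)).mpr (H v)

theorem injective_id : (Hom.id X).Injective := fun _ _ _ e => e

theorem Injective.comp {g : Hom Y Z} {f : Hom X Y} (hg : g.Injective) (hf : f.Injective) :
    (g ⊚ f).Injective := fun v => (hg v).comp (hf v)

theorem Surjective.comp {g : Hom Y Z} {f : Hom X Y} (hg : g.Surjective) (hf : f.Surjective) :
    (g ⊚ f).Surjective := fun v => (hg v).comp (hf v)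

theorem Injective.eq_zero_of_comp {g : Hom Y Z} {f : Hom X Y} (hg : g.Injective)
    (H : g ⊚ f = 0) : f = 0 :=
  ext fun v x => hg v (by simpa using congr_apply H v x)

theorem Surjective.eq_zero_of_comp {g : Hom Y Z} {f : Hom X Y} (hf : f.Surjective)
    (H : g ⊚ f = 0) : g = 0 := by
  ext v y
  obtain ⟨x, rfl⟩ := hf v y
  exact congr_apply H v x

/-- Composition with `g : Y ⟶ Z` as a linear map `Hom(X, Y) → Hom(X, Z)`. -/
def postcomp (X : QuivRep K V A t h) (g : Hom Y Z) : Hom X Y →ₗ[K] Hom X Z where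
  toFun f := g ⊚ f
  map_add' _ _ := by ext; simp
  map_smul' _ _ := by ext; simp

/-- Composition with `f : X ⟶ Y` as a linear map `Hom(Y, Z) → Hom(X, Z)`. -/
def precomp (f : Hom X Y) (Z : QuivRep K V A t h) : Hom Y Z →ₗ[K] Hom X Z where
  toFun g := g ⊚ f
  map_add' _ _ := by ext; simp
  map_smul' _ _ := by ext; simp

theorem Injective.postcomp {g : Hom Y Z} (hg : g.Injective) (X : QuivRep K V A t h) :
    Function.Injective (postcomp X g) :=
  (injective_iff_map_eq_zero _).mpr fun _ => hg.eq_zero_of_comp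

theorem Surjective.precomp {f : Hom X Y} (hf : f.Surjective) (Z : QuivRep K V A t h) :
    Function.Injective (precomp f Z) :=
  (injective_iff_map_eq_zero _).mpr fun _ => hf.eq_zero_of_comp

end Hom

/-- `i` is a kernel of `f`. -/
structure IsKernel (i : Hom X Y) (f : Hom Y Z) : Prop where
  injective : i.Injective
  exact : ∀ v, Function.Exact (i v) (f v)

/-- `0 ⟶ X ⟶ Y ⟶ Z ⟶ 0` is a short exact sequence. -/
structure ShortExact (i : Hom X Y) (p : Hom Y Z) : Prop extends IsKernel i p where
  surjective : p.Surjective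

theorem IsKernel.comp_eq_zero {i : Hom X Y} {f : Hom Y Z} (hi : IsKernel i f) : f ⊚ i = 0 :=
  Hom.ext fun v x => (hi.exact v).apply_apply_eq_zero x

theorem IsKernel.exists_apply_eq {i : Hom X Y} {f : Hom Y Z} (hi : IsKernel i f) {v : V}
    {y : Y.sp v} (hy : f v y = 0) : ∃ x, i v x = y :=
  (hi.exact v y).mp hy

theorem Hom.Injective.exists_comp_eq {i : Hom Y Z} (hi : i.Injective) (f : Hom X Z)
    (H : ∀ v x, f v x ∈ LinearMap.range (i v)) : ∃ g, i ⊚ g = f := by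
  let e v := LinearEquiv.ofInjective (i v) (hi v)
  have key (v : V) (x : X.sp v) : i v ((e v).symm ⟨f v x, H v x⟩) = f v x :=
    congrArg Subtype.val ((e v).apply_symm_apply ⟨f v x, H v x⟩)
  refine ⟨.ofNatural (fun v => (e v).symm.toLinearMap ∘ₗ (f v).codRestrict _ (H v)) ?_,
    Hom.ext key⟩
  intro a x
  apply hi
  rw [Hom.naturality]
  exact (key _ _).trans ((f.naturality a x).trans (congrArg _ (key _ _).symm))

theorem Hom.Surjective.exists_comp_eq {p : Hom X Y} (hp : p.Surjective) (f : Hom X Z)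
    (H : ∀ v x, p v x = 0 → f v x = 0) : ∃ g, g ⊚ p = f := by
  let e v := (p v).quotKerEquivOfSurjective (hp v)
  have key (v : V) (x : X.sp v) :
      (LinearMap.ker (p v)).liftQ (f v) (H v) ((e v).symm (p v x)) = f v x := by
    have : (e v).symm (p v x) = (LinearMap.ker (p v)).mkQ x := by
      rw [LinearEquiv.symm_apply_eq]
      rfl
    exact this ▸ Submodule.liftQ_apply _ _ _
  refine ⟨.ofNatural (fun v => (LinearMap.ker (p v)).liftQ (f v) (H v) ∘ₗ (e v).symm) ?_,
    Hom.ext key⟩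
  intro a y
  obtain ⟨x, rfl⟩ := hp _ y
  rw [← p.naturality]
  exact (key _ _).trans ((f.naturality a x).trans (congrArg _ (key _ _).symm))

theorem IsKernel.exists_lift {i : Hom X Y} {f : Hom Y Z} (hi : IsKernel i f) (g : Hom W Y)
    (H : f ⊚ g = 0) : ∃ k, i ⊚ k = g :=
  hi.injective.exists_comp_eq g fun v x => hi.exists_apply_eq (Hom.congr_apply H v x)

theorem ShortExact.exists_desc {i : Hom X Y} {p : Hom Y Z} (S : ShortExact i p) (g : Hom Y W)
    (H : g ⊚ i = 0) : ∃ k, k ⊚ p = g :=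
  S.surjective.exists_comp_eq g fun v y hy => by
    obtain ⟨x, rfl⟩ := S.exists_apply_eq hy
    exact Hom.congr_apply H v x

theorem ShortExact.dimVec_eq {i : Hom X Y} {p : Hom Y Z} (S : ShortExact i p) :
    Y.dimVec = X.dimVec + Z.dimVec := by
  funext v
  have := (p v).finrank_range_add_finrank_ker
  rw [(S.exact v).linearMap_ker_eq, LinearMap.range_eq_top.mpr (S.surjective v), finrank_top,
    LinearMap.finrank_range_of_inj (S.injective v)] at this
  simp only [dimVec, Pi.add_apply]
  omega

namespace Sub

/-- A subrepresentation, as a representation. -/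
def toRep (U : Sub X) : QuivRep K V A t h where
  sp v := U.sub v
  map a := (X.map a).restrict (U.le a)

/-- The inclusion of a subrepresentation. -/
def incl (U : Sub X) : Hom U.toRep X :=
  .ofNatural (fun v => (U.sub v).subtype) fun _ _ => rfl

/-- The quotient by a subrepresentation. -/
def quotient (U : Sub X) : QuivRep K V A t h where
  sp v := X.sp v ⧸ U.sub v
  map a := Submodule.mapQ _ _ (X.map a) (U.le a)

/-- The projection to the quotient by a subrepresentation. -/
def mkQ (U : Sub X) : Hom X U.quotient :=
  .ofNatural (fun v => (U.sub v).mkQ) fun _ _ => rfl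

theorem injective_incl (U : Sub X) : U.incl.Injective := fun _ => Subtype.val_injective

theorem shortExact (U : Sub X) : ShortExact U.incl U.mkQ where
  injective := U.injective_incl
  exact v := LinearMap.exact_subtype_mkQ (U.sub v)
  surjective v := Submodule.mkQ_surjective (U.sub v)

end Sub

theorem exists_isKernel (f : Hom X Y) :
    ∃ (k : QuivRep K V A t h) (i : Hom k X), IsKernel i f := by
  let U : Sub X := ⟨fun v => LinearMap.ker (f v), fun a x hx => by
    rw [LinearMap.mem_ker] at hx ⊢
    rw [f.naturality, hx, map_zero]⟩
  exact ⟨U.toRep, U.incl, U.injective_incl, fun v => LinearMap.exact_subtype_ker_map (f v)⟩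

theorem Hom.Injective.exists_cokernel {i : Hom X Y} (hi : i.Injective) :
    ∃ (C : QuivRep K V A t h) (q : Hom Y C), ShortExact i q := by
  let U : Sub Y := ⟨fun v => LinearMap.range (i v), by
    rintro a _ ⟨x, rfl⟩
    exact ⟨X.map a x, i.naturality a x⟩⟩
  exact ⟨U.quotient, U.mkQ, ⟨hi, fun v => LinearMap.exact_map_mkQ_range (i v)⟩,
    U.shortExact.surjective⟩

theorem exists_image (f : Hom X Y) : ∃ (I : QuivRep K V A t h) (p : Hom X I) (i : Hom I Y),
    p.Surjective ∧ i.Injective ∧ i ⊚ p = f := by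
  let U : Sub Y := ⟨fun v => LinearMap.range (f v), by
    rintro a _ ⟨x, rfl⟩
    exact ⟨X.map a x, f.naturality a x⟩⟩
  exact ⟨U.toRep, .ofNatural (fun v => (f v).rangeRestrict) fun a x =>
      Subtype.ext (f.naturality a x), U.incl,
    fun v => (f v).surjective_rangeRestrict, U.injective_incl, rfl⟩

theorem Hom.Surjective.exists_kernel {p : Hom X Y} (hp : p.Surjective) :
    ∃ (k : QuivRep K V A t h) (i : Hom k X), ShortExact i p := by
  obtain ⟨k, i, hi⟩ := exists_isKernel p
  exact ⟨k, i, hi, hp⟩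

end Morphisms

end QuivRep

section EulerForm

variable {V A : Type} [Fintype V] [Fintype A] {t h : A → V} {R : Type} [CommRing R]

/-- The Euler form as a bilinear map. -/
def eulerBilin (t h : A → V) (R : Type) [CommRing R] : LinearMap.BilinForm R (V → R) :=
  LinearMap.mk₂ R (eulerForm t h)
    (fun _ _ _ => by
      simp only [eulerForm, Pi.add_apply, add_mul, Finset.sum_add_distrib, add_sub_add_comm])
    (fun _ _ _ => by
      simp only [eulerForm, Pi.smul_apply, smul_eq_mul, mul_sub, Finset.mul_sum, mul_assoc])
    (fun _ _ _ => by
      simp only [eulerForm, Pi.add_apply, mul_add, Finset.sum_add_distrib, add_sub_add_comm])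
    (fun _ _ _ => by
      simp only [eulerForm, Pi.smul_apply, smul_eq_mul, mul_sub, Finset.mul_sum, mul_left_comm])

@[simp] theorem eulerBilin_apply (x y : V → R) : eulerBilin t h R x y = eulerForm t h x y := rfl

theorem eulerForm_add_left (x y z : V → R) :
    eulerForm t h (x + y) z = eulerForm t h x z + eulerForm t h y z :=
  (eulerBilin t h R).map_add₂ x y z

theorem eulerForm_add_right (x y z : V → R) :
    eulerForm t h x (y + z) = eulerForm t h x y + eulerForm t h x z :=
  map_add (eulerBilin t h R x) y z

end EulerForm

theorem natZ_add {V : Type} (x y : V → ℕ) : natZ (x + y) = natZ x + natZ y :=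
  funext fun _ => Nat.cast_add _ _

namespace QuivRep

section Ringel

variable {K : Type} [Field K] {V A : Type} {t h : A → V}
variable {W X X' Y Y' Z : QuivRep K V A t h}

theorem ker_dmap (X Y : QuivRep K V A t h) : LinearMap.ker (dmap X Y) = homS X Y := by
  ext f
  exact funext_iff.trans (forall_congr' fun _ => sub_eq_zero)

theorem dmap_apply (X Y : QuivRep K V A t h) (f : ∀ v, X.sp v →ₗ[K] Y.sp v) (a : A)
    (x : X.sp (t a)) : dmap X Y f a x = f (h a) (X.map a x) - Y.map a (f (t a) x) := rfl

/-- Ringel's formula. -/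
theorem homDim_sub_extDim [Fintype V] [Fintype A] (X Y : QuivRep K V A t h) :
    (homDim X Y : ℤ) - extDim X Y = eulerForm t h (natZ X.dimVec) (natZ Y.dimVec) := by
  have rank_nullity := (dmap X Y).finrank_range_add_finrank_ker
  have rank_coker := (LinearMap.range (dmap X Y)).finrank_quotient_add_finrank
  rw [ker_dmap] at rank_nullity
  simp only [Module.finrank_pi_fintype, Module.finrank_linearMap] at rank_nullity rank_coker
  simp only [eulerForm, natZ, homDim, extDim, dimVec]
  zify at rank_nullity rank_coker
  linarith

theorem extDim_eq_zero_iff [Finite A] :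
    extDim X Y = 0 ↔ Function.Surjective (dmap X Y) := by
  rw [extDim, Module.finrank_zero_iff, Submodule.Quotient.subsingleton_iff,
    LinearMap.range_eq_top]

theorem homDim_eq_zero_iff [Finite V] : homDim X Y = 0 ↔ ∀ f : Hom X Y, f = 0 := by
  rw [homDim, Module.finrank_zero_iff, subsingleton_iff_forall_eq 0]

theorem exists_hom_ne_zero [Finite V] (H : 0 < homDim X Y) : ∃ f : Hom X Y, f ≠ 0 := by
  simpa [homDim_eq_zero_iff] using H.ne'

theorem homDim_pos [Finite V] {f : Hom X Y} (hf : f ≠ 0) : 0 < homDim X Y :=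
  Nat.pos_of_ne_zero fun H => hf (homDim_eq_zero_iff.mp H f)

theorem finrank_quotient_le_of_surjective {M N : Type} [AddCommGroup M] [Module K M]
    [FiniteDimensional K M] [AddCommGroup N] [Module K N] {P : M →ₗ[K] N}
    (hP : Function.Surjective P) {p : Submodule K M} {q : Submodule K N} (hpq : p ≤ q.comap P) :
    Module.finrank K (N ⧸ q) ≤ Module.finrank K (M ⧸ p) := by
  refine LinearMap.finrank_le_finrank_of_surjective (f := p.mapQ q P hpq) ?_
  refine .of_comp (g := p.mkQ) ?_
  rw [← LinearMap.coe_comp, Submodule.mapQ_mkQ]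
  exact q.mkQ_surjective.comp hP

/-- `Ext` is right exact in the first variable. -/
theorem Hom.Injective.extDim_le [Finite A] {f : Hom X' X} (hf : f.Injective)
    (Y : QuivRep K V A t h) : extDim X' Y ≤ extDim X Y := by
  refine finrank_quotient_le_of_surjective
    (P := LinearMap.piMap fun a => LinearMap.lcomp K (Y.sp (h a)) (f (t a))) (fun c => ?_) ?_
  · choose r hr using fun a => (f (t a)).exists_leftInverse_of_injective
      (LinearMap.ker_eq_bot.mpr (hf (t a)))
    refine ⟨fun a => c a ∘ₗ r a, funext fun a => ?_⟩
    change (c a ∘ₗ r a) ∘ₗ f (t a) = c a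
    rw [LinearMap.comp_assoc, hr, LinearMap.comp_id]
  · rintro _ ⟨φ, rfl⟩
    refine ⟨fun v => φ v ∘ₗ f v, funext fun a => LinearMap.ext fun x => ?_⟩
    simp [dmap_apply, f.naturality]

/-- `Ext` is right exact in the second variable. -/
theorem Hom.Surjective.extDim_le [Finite A] {f : Hom Y Y'} (hf : f.Surjective)
    (X : QuivRep K V A t h) : extDim X Y' ≤ extDim X Y := by
  refine finrank_quotient_le_of_surjective
    (P := LinearMap.piMap fun a => LinearMap.compRight (M := X.sp (t a)) K (f (h a)))
    (fun c => ?_) ?_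
  · choose r hr using fun a => (f (h a)).exists_rightInverse_of_surjective
      (LinearMap.range_eq_top.mpr (hf (h a)))
    refine ⟨fun a => r a ∘ₗ c a, funext fun a => ?_⟩
    change f (h a) ∘ₗ r a ∘ₗ c a = c a
    rw [← LinearMap.comp_assoc, hr, LinearMap.id_comp]
  · rintro _ ⟨φ, rfl⟩
    refine ⟨fun v => f v ∘ₗ φ v, funext fun a => LinearMap.ext fun x => ?_⟩
    simp [dmap_apply, f.naturality]

theorem Hom.Injective.homDim_le [Finite V] {g : Hom Y Z} (hg : g.Injective)
    (X : QuivRep K V A t h) : homDim X Y ≤ homDim X Z :=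
  LinearMap.finrank_le_finrank_of_injective (hg.postcomp X)

theorem Hom.Surjective.homDim_le [Finite V] {f : Hom X Y} (hf : f.Surjective)
    (Z : QuivRep K V A t h) : homDim Y Z ≤ homDim X Z :=
  LinearMap.finrank_le_finrank_of_injective (hf.precomp Z)

/-- The obstruction to extending `f` along `i` lies in `Ext(Z, W)`. -/
theorem ShortExact.exists_extend [Finite A] {i : Hom X Y} {p : Hom Y Z} (S : ShortExact i p)
    (hext : extDim Z W = 0) (f : Hom X W) : ∃ g : Hom Y W, g ⊚ i = f := by
  choose r hr using fun v => (i v).exists_leftInverse_of_injective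
    (LinearMap.ker_eq_bot.mpr (S.injective v))
  choose s hs using fun v => (p v).exists_rightInverse_of_surjective
    (LinearMap.range_eq_top.mpr (S.surjective v))
  replace hr v x : r v (i v x) = x := LinearMap.congr_fun (hr v) x
  replace hs v z : p v (s v z) = z := LinearMap.congr_fun (hs v) z
  let g₀ v := f v ∘ₗ r v
  have defect_i (a x) : dmap Y W g₀ a (i (t a) x) = 0 := by
    simp [g₀, dmap_apply, ← i.naturality, hr, f.naturality]
  obtain ⟨ψ, hψ⟩ := extDim_eq_zero_iff.mp hext fun a => dmap Y W g₀ a ∘ₗ s (t a)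
  have defect_eq (a y) : dmap Y W g₀ a y = dmap Z W ψ a (p (t a) y) := by
    obtain ⟨x, hx⟩ := S.exists_apply_eq (y := s (t a) (p (t a) y) - y) (by simp [hs])
    rw [hψ, LinearMap.comp_apply, ← sub_eq_zero, ← neg_sub, ← map_sub, ← hx, defect_i, neg_zero]
  refine ⟨.ofNatural (fun v => g₀ v - ψ v ∘ₗ p v) fun a y => ?_, Hom.ext fun v x => ?_⟩
  · have := defect_eq a y
    rw [dmap_apply, dmap_apply, ← p.naturality] at this
    simpa [sub_eq_sub_iff_sub_eq_sub] using this
  · simp [g₀, hr, (S.exact v).apply_apply_eq_zero]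

end Ringel

section Bricks

variable {K : Type} [Field K] {V A : Type} {t h : A → V} {X Y I : QuivRep K V A t h}

theorem IsSchur.id_ne_zero (hX : IsSchur X) : Hom.id X ≠ 0 := by
  have : Nontrivial (Hom X X) :=
    Module.nontrivial_of_finrank_pos (R := K) (Nat.lt_of_lt_of_eq Nat.one_pos (Eq.symm hX))
  obtain ⟨f, hf⟩ := exists_ne (0 : Hom X X)
  exact fun H => hf (Hom.ext fun v x => by simpa using congrArg (f v) (Hom.congr_apply H v x))

theorem IsSchur.exists_smul_id_eq (hX : IsSchur X) (f : Hom X X) : ∃ c : K, c • Hom.id X = f :=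
  (finrank_eq_one_iff_of_nonzero' _ hX.id_ne_zero).mp hX f

theorem IsSchur.comp_eq_zero_of_not_surjective (hY : IsSchur Y) {i : Hom I Y}
    (hi : ¬ i.Surjective) (g : Hom Y I) : i ⊚ g = 0 := by
  obtain ⟨c, hc⟩ := hY.exists_smul_id_eq (i ⊚ g)
  rcases eq_or_ne c 0 with rfl | hc0
  · rw [← hc, zero_smul]
  · refine absurd (fun v y => ⟨g v (c⁻¹ • y), ?_⟩) hi
    simpa [hc0] using (Hom.congr_apply hc v (c⁻¹ • y)).symm

theorem IsSchur.comp_eq_zero_of_not_injective (hX : IsSchur X) {p : Hom X I}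
    (hp : ¬ p.Injective) (g : Hom I X) : g ⊚ p = 0 := by
  obtain ⟨c, hc⟩ := hX.exists_smul_id_eq (g ⊚ p)
  rcases eq_or_ne c 0 with rfl | hc0
  · rw [← hc, zero_smul]
  · refine absurd (Hom.injective_of_apply_eq_zero fun v x hx => ?_) hp
    simpa [hx, hc0] using Hom.congr_apply hc v x

/-- The **Happel–Ringel lemma**. If `f` is neither mono nor epi, let `I`, `k` and `C` be its
image, kernel and cokernel; then `hom(C, k) ≥ ⟨C, k⟩ = ⟨Y - I, X - I⟩ = hom(Y, X) + hom(I, I)`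
contradicts `Hom(C, k) ⊆ Hom(Y, X)`. -/
theorem IsSchur.injective_or_surjective [Finite V] [Finite A] (hX : IsSchur X) (hY : IsSchur Y)
    (hext : extDim Y X = 0) {f : Hom X Y} (hf : f ≠ 0) : f.Injective ∨ f.Surjective := by
  cases nonempty_fintype V
  cases nonempty_fintype A
  by_contra! ⟨hinj, hsurj⟩
  obtain ⟨I, p, i, hp, hi, rfl⟩ := exists_image f
  obtain ⟨k, j, hj⟩ := hp.exists_kernel
  obtain ⟨C, q, hq⟩ := hi.exists_cokernel
  have homYI : homDim Y I = 0 := homDim_eq_zero_iff.mpr fun g => hi.eq_zero_of_comp <|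
    hY.comp_eq_zero_of_not_surjective (fun H => hsurj (H.comp hp)) g
  have homIX : homDim I X = 0 := homDim_eq_zero_iff.mpr fun g => hp.eq_zero_of_comp <|
    hX.comp_eq_zero_of_not_injective (fun H => hinj (hi.comp H)) g
  have homII : 0 < homDim I I := homDim_pos (f := Hom.id I) fun H =>
    hf (Hom.ext fun v x => by simpa using congrArg (i v) (Hom.congr_apply H v (p v x)))
  have extYI := hp.extDim_le Y
  have extIX := hi.extDim_le X
  have extII := hp.extDim_le I
  have homCk : homDim C k ≤ homDim Y X :=
    (hj.injective.homDim_le C).trans (hq.surjective.homDim_le X)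
  have formula_YX := homDim_sub_extDim Y X
  have formula_YI := homDim_sub_extDim Y I
  have formula_IX := homDim_sub_extDim I X
  rw [hj.dimVec_eq, hq.dimVec_eq] at formula_YX
  rw [hq.dimVec_eq] at formula_YI
  rw [hj.dimVec_eq] at formula_IX
  simp only [natZ_add, eulerForm_add_left, eulerForm_add_right]
    at formula_YX formula_YI formula_IX
  have formula_II := homDim_sub_extDim I I
  have formula_Ck := homDim_sub_extDim C k
  omega

theorem IsExceptional.homDim_eq_zero [Fintype V] [Fintype A] (hX : X.IsExceptional)
    (hY : Y.IsExceptional) (hext : extDim Y X = 0)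
    (hle : eulerForm t h (natZ X.dimVec) (natZ Y.dimVec) ≤ 0) : homDim X Y = 0 := by
  by_contra hne
  obtain ⟨f, hf⟩ := exists_hom_ne_zero (Nat.pos_of_ne_zero hne)
  have hextXY : extDim X Y = 0 := by
    rcases hX.2.injective_or_surjective hY.2 hext hf with hinj | hsurj
    · exact Nat.le_zero.mp (hY.1 ▸ hinj.extDim_le Y)
    · exact Nat.le_zero.mp (hX.1 ▸ hsurj.extDim_le X)
  have := homDim_sub_extDim X Y
  omega

theorem repIso_of_bijective {f : Hom X Y} (hinj : f.Injective) (hsurj : f.Surjective) :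
    RepIso K X Y :=
  ⟨fun v => .ofBijective (f v) ⟨hinj v, hsurj v⟩, f.naturality⟩

theorem _root_.RepIso.exists_bijective (H : RepIso K X Y) :
    ∃ f : Hom X Y, f.Injective ∧ f.Surjective := by
  obtain ⟨e, he⟩ := H
  exact ⟨.ofNatural (fun v => (e v).toLinearMap) he, fun v => (e v).injective,
    fun v => (e v).surjective⟩

theorem _root_.RepIso.symm (H : RepIso K X Y) : RepIso K Y X := by
  obtain ⟨e, he⟩ := H
  refine ⟨fun v => (e v).symm, fun a y => ?_⟩
  rw [LinearEquiv.symm_apply_eq, he, LinearEquiv.apply_symm_apply]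

theorem _root_.RepIso.extDim_le [Finite A] {X' Y' : QuivRep K V A t h} (HX : RepIso K X X')
    (HY : RepIso K Y Y') : extDim X Y ≤ extDim X' Y' := by
  obtain ⟨f, hf, -⟩ := HX.exists_bijective
  obtain ⟨g, -, hg⟩ := HY.symm.exists_bijective
  exact (hf.extDim_le Y).trans (hg.extDim_le X')

theorem Hom.Injective.surjective_of_dimVec_eq {f : Hom X Y} (hf : f.Injective)
    (H : X.dimVec = Y.dimVec) : f.Surjective := fun v =>
  (LinearMap.injective_iff_surjective_of_finrank_eq_finrank (congrFun H v)).mp (hf v)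

theorem Hom.Surjective.injective_of_dimVec_eq {f : Hom X Y} (hf : f.Surjective)
    (H : X.dimVec = Y.dimVec) : f.Injective := fun v =>
  (LinearMap.injective_iff_surjective_of_finrank_eq_finrank (congrFun H v)).mpr (hf v)

theorem IsExceptional.repIso [Finite V] [Finite A] (hX : X.IsExceptional)
    (hY : Y.IsExceptional) (hdim : X.dimVec = Y.dimVec) (hext : extDim Y X = 0) :
    RepIso K X Y := by
  cases nonempty_fintype V
  cases nonempty_fintype A
  have hXX := homDim_sub_extDim X X
  have hXY := homDim_sub_extDim X Y
  rw [← hdim, ← hXX, hX.1, hX.2] at hXY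
  obtain ⟨f, hf⟩ := exists_hom_ne_zero (X := X) (Y := Y) (by omega)
  rcases hX.2.injective_or_surjective hY.2 hext hf with hinj | hsurj
  · exact repIso_of_bijective hinj (hinj.surjective_of_dimVec_eq hdim)
  · exact repIso_of_bijective (hsurj.injective_of_dimVec_eq hdim) hsurj

end Bricks

end QuivRep

section Pencil

variable {K : Type} [Field K]

/-- With `R` a right inverse of `F₀ + s₀ F₁`, the map `(F₀ + s F₁) R = 1 + (s - s₀) F₁ R` is
invertible unless `-(s - s₀)⁻¹` is an eigenvalue of `F₁ R`. -/
theorem finite_not_surjective_add_smul {U W : Type} [AddCommGroup U] [Module K U]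
    [AddCommGroup W] [Module K W] [FiniteDimensional K W] (F₀ F₁ : U →ₗ[K] W) {s₀ : K}
    (hs₀ : Function.Surjective (F₀ + s₀ • F₁)) :
    {s : K | ¬ Function.Surjective (F₀ + s • F₁)}.Finite := by
  obtain ⟨R, hR⟩ := (F₀ + s₀ • F₁).exists_rightInverse_of_surjective
    (LinearMap.range_eq_top.mpr hs₀)
  let G : Module.End K W := F₁ ∘ₗ R
  have eq_one_add (s : K) : (F₀ + s • F₁) ∘ₗ R = 1 + (s - s₀) • G := by
    rw [Module.End.one_eq_id, ← hR, LinearMap.add_comp, LinearMap.add_comp, LinearMap.smul_comp,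
      LinearMap.smul_comp]
    module
  refine ((Module.End.finite_spectrum G).preimage
    (f := fun s => -(s - s₀)⁻¹) fun _ _ _ _ H => ?_).subset fun s hs => ?_
  · simpa using H
  · have hne : s - s₀ ≠ 0 := fun H => hs (sub_eq_zero.mp H ▸ hs₀)
    rw [Set.mem_preimage, spectrum.mem_iff]
    contrapose! hs
    have hunit := (hs.smul (Units.mk0 _ hne)).neg
    rw [Units.smul_mk0, smul_sub, neg_sub, sub_eq_add_neg, Algebra.algebraMap_eq_smul_one,
      smul_smul, mul_neg, mul_inv_cancel₀ hne, neg_smul, one_smul, neg_neg, add_comm] at hunit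
    rw [Module.End.isUnit_iff, ← eq_one_add, LinearMap.coe_comp] at hunit
    exact fun H => H hunit.surjective.of_comp

namespace QuivRep

variable {V A : Type} {t h : A → V} {E E₁ E₂ X Y : QuivRep K V A t h}

/-- The member of parameter `s` of the line through `X` in the direction `F` in the space of
representations on the vector spaces of `X`. -/
abbrev pencil (X : QuivRep K V A t h) (F : ∀ a, X.sp (t a) →ₗ[K] X.sp (h a)) (s : K) :
    QuivRep K V A t h where
  sp := X.sp
  map a := X.map a + s • F a

theorem pencil_zero_right (X : QuivRep K V A t h) (F : ∀ a, X.sp (t a) →ₗ[K] X.sp (h a)) :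
    X.pencil F 0 = X := by
  simp [pencil]

theorem pencil_zero_left (X : QuivRep K V A t h) (s : K) : X.pencil 0 s = X := by
  simp [pencil]

theorem finite_extDim_pencil_ne_zero [Finite A] {F : ∀ a, X.sp (t a) →ₗ[K] X.sp (h a)}
    {G : ∀ a, Y.sp (t a) →ₗ[K] Y.sp (h a)} {s₀ : K}
    (H : extDim (X.pencil F s₀) (Y.pencil G s₀) = 0) :
    {s | extDim (X.pencil F s) (Y.pencil G s) ≠ 0}.Finite := by
  have dmap_pencil (s : K) : dmap (X.pencil F s) (Y.pencil G s) =
      dmap X Y + s • dmap { X with map := F } { Y with map := G } := by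
    refine LinearMap.ext fun φ => funext fun a => LinearMap.ext fun x => ?_
    change φ (h a) (X.map a x + s • F a x) - (Y.map a (φ (t a) x) + s • G a (φ (t a) x)) =
      (φ (h a) (X.map a x) - Y.map a (φ (t a) x)) +
        s • (φ (h a) (F a x) - G a (φ (t a) x))
    rw [map_add, map_smul, smul_sub]
    abel
  simp only [ne_eq, extDim_eq_zero_iff, dmap_pencil] at H ⊢
  exact finite_not_surjective_add_smul _ _ H

theorem IsExceptional.eulerForm_self [Fintype V] [Fintype A] (hX : X.IsExceptional) :
    eulerForm t h (natZ X.dimVec) (natZ X.dimVec) = 1 := by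
  rw [← homDim_sub_extDim, hX.1, hX.2]
  rfl

theorem IsExceptional.finite_not_repIso_pencil [Finite V] [Finite A] (hE : E.IsExceptional)
    (F : ∀ a, E.sp (t a) →ₗ[K] E.sp (h a)) : {s | ¬ RepIso K E (E.pencil F s)}.Finite := by
  cases nonempty_fintype V
  cases nonempty_fintype A
  have bad_self := finite_extDim_pencil_ne_zero (F := F) (G := F) (s₀ := 0)
    (by rw [pencil_zero_right]; exact hE.1)
  have bad_left := finite_extDim_pencil_ne_zero (F := F) (G := 0) (s₀ := 0)
    (by rw [pencil_zero_right, pencil_zero_right]; exact hE.1)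
  refine (bad_self.union bad_left).subset fun s hs => ?_
  contrapose! hs
  simp only [Set.mem_union, Set.mem_ofPred_eq, not_or, not_not, pencil_zero_left] at hs ⊢
  obtain ⟨hrigid, hext⟩ := hs
  have formula := homDim_sub_extDim (E.pencil F s) (E.pencil F s)
  have hschur : homDim (E.pencil F s) (E.pencil F s) = 1 := by
    have := hE.eulerForm_self
    change _ = eulerForm t h (natZ E.dimVec) (natZ E.dimVec) at formula
    omega
  exact hE.repIso ⟨hrigid, hschur⟩ rfl hext

theorem exists_repIso_pencil (hdim : X.dimVec = E.dimVec) :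
    ∃ F, RepIso K X (E.pencil F 1) := by
  let e (v) : X.sp v ≃ₗ[K] E.sp v := .ofFinrankEq _ _ (congrFun hdim v)
  refine ⟨fun a => e (h a) ∘ₗ X.map a ∘ₗ (e (t a)).symm - E.map a, e, fun a x => ?_⟩
  simp

/-- Exceptional representations are generic in their dimension vectors, so that `E₁` and `E₂` occur
on the lines joining them to a pair of representations without extensions. -/
theorem IsExceptional.extDim_eq_zero_of_extMin [Finite V] [Finite A] [Infinite K]
    (hE₁ : E₁.IsExceptional) (hE₂ : E₂.IsExceptional)
    (H : extMin K t h E₁.dimVec E₂.dimVec = 0) : extDim E₁ E₂ = 0 := by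
  obtain ⟨X₁, X₂, hX₁, hX₂, hext⟩ := Nat.sInf_mem
    (s := {n | ∃ X Y : QuivRep K V A t h, X.dimVec = E₁.dimVec ∧ Y.dimVec = E₂.dimVec ∧
      extDim X Y = n}) ⟨_, E₁, E₂, rfl, rfl, rfl⟩
  replace hext : extDim X₁ X₂ = 0 := hext.trans H
  obtain ⟨F₁, iso₁⟩ := exists_repIso_pencil hX₁
  obtain ⟨F₂, iso₂⟩ := exists_repIso_pencil hX₂
  have bad := finite_extDim_pencil_ne_zero (F := F₁) (G := F₂) (s₀ := 1)
    (Nat.le_zero.mp (hext ▸ iso₁.symm.extDim_le iso₂.symm))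
  obtain ⟨s, hs⟩ := ((bad.union (hE₁.finite_not_repIso_pencil F₁)).union
    (hE₂.finite_not_repIso_pencil F₂)).infinite_compl.nonempty
  simp only [Set.mem_compl_iff, Set.mem_union, Set.mem_ofPred_eq, not_or, not_not] at hs
  exact Nat.le_zero.mp (hs.1.1 ▸ hs.1.2.extDim_le hs.2)

end QuivRep

end Pencil

section Orthogonal

variable {K : Type} [Field K] {V A : Type} {t h : A → V}

namespace QuivRep

/-- A family of pairwise Hom-orthogonal bricks. -/
structure IsOrthogonalBricks {ι : Type} (E : ι → QuivRep K V A t h) : Prop where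
  isSchur : ∀ j, IsSchur (E j)
  homDim_eq_zero : ∀ i j, i ≠ j → homDim (E i) (E j) = 0

end QuivRep

open QuivRep

theorem extMin_le_extDim (X Y : QuivRep K V A t h) :
    extMin K t h X.dimVec Y.dimVec ≤ extDim X Y :=
  Nat.sInf_le ⟨X, Y, rfl, rfl, rfl⟩

theorem eulerForm_le_homMin [Fintype V] [Fintype A] (X Y : QuivRep K V A t h) :
    eulerForm t h (natZ X.dimVec) (natZ Y.dimVec) ≤ homMin K t h X.dimVec Y.dimVec := by
  obtain ⟨X', Y', hX, hY, hhom⟩ := Nat.sInf_mem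
    (s := {n | ∃ X' Y' : QuivRep K V A t h, X'.dimVec = X.dimVec ∧ Y'.dimVec = Y.dimVec ∧
      homDim X' Y' = n}) ⟨_, X, Y, rfl, rfl, rfl⟩
  change homDim X' Y' = homMin K t h X.dimVec Y.dimVec at hhom
  have := homDim_sub_extDim X' Y'
  rw [hX, hY] at this
  omega

theorem IsQES.exists_isOrthogonalBricks [Fintype V] [Fintype A] [Infinite K] {l : ℕ}
    {b : Fin l → V → ℕ} (hb : IsQES K t h b) : ∃ E : Fin l → QuivRep K V A t h,
      (∀ j, (E j).dimVec = b j) ∧ (∀ j, (E j).IsExceptional) ∧ IsOrthogonalBricks E := by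
  choose E hdim hexc using hb.1
  have ext_zero {i j} (hij : i < j) : extDim (E i) (E j) = 0 :=
    (hexc i).extDim_eq_zero_of_extMin (hexc j) (by rw [hdim, hdim]; exact (hb.2 i j hij).2.1)
  have hom_zero {i j} (hij : i < j) : homDim (E i) (E j) = 0 := by
    have := homDim_sub_extDim (E i) (E j)
    have := eulerForm_le_homMin (E i) (E j)
    rw [hdim i, hdim j, (hb.2 i j hij).1, Nat.cast_zero, ← hdim i, ← hdim j] at this
    have := ext_zero hij
    omega
  refine ⟨E, hdim, hexc, fun j => (hexc j).2, fun i j hij => ?_⟩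
  rcases lt_or_gt_of_ne hij with hlt | hgt
  · exact hom_zero hlt
  · refine (hexc i).homDim_eq_zero (hexc j) (ext_zero hgt) ?_
    rw [hdim, hdim]
    exact (hb.2 j i hgt).2.2

end Orthogonal

namespace QuivRep

section Diagrams

variable {K : Type} [Field K] {V A : Type} {t h : A → V}
variable {k k' C C' E X X' Y Y' Z : QuivRep K V A t h}

theorem IsKernel.of_comp_eq_zero {i : Hom X Y} {f : Hom Y Z}
    (injective : ∀ v x, i v x = 0 → x = 0) (zero : f ⊚ i = 0)
    (exact : ∀ v y, f v y = 0 → ∃ x, i v x = y) : IsKernel i f where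
  injective := Hom.injective_of_apply_eq_zero injective
  exact v y := ⟨exact v y, fun ⟨x, hx⟩ => hx ▸ Hom.congr_apply zero v x⟩

/-- `(Y / E) / (X / E) ≅ Y / X`. -/
theorem ShortExact.third_iso {i₀ : Hom E X} {p₀ : Hom X X'} (S₀ : ShortExact i₀ p₀)
    {i : Hom X Y} {p : Hom Y Z} (S : ShortExact i p) {q : Hom Y Y'}
    (Sq : ShortExact (i ⊚ i₀) q) : ∃ (i' : Hom X' Y') (p' : Hom Y' Z), ShortExact i' p' := by
  obtain ⟨i', hi'⟩ := S₀.exists_desc (q ⊚ i) Sq.comp_eq_zero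
  obtain ⟨p', hp'⟩ := Sq.exists_desc p <|
    Hom.ext fun v x => Hom.congr_apply S.comp_eq_zero v (i₀ v x)
  replace hi' v x : i' v (p₀ v x) = q v (i v x) := Hom.congr_apply hi' v x
  replace hp' v y : p' v (q v y) = p v y := Hom.congr_apply hp' v y
  refine ⟨i', p', .of_comp_eq_zero (fun v x' hx => ?_) (S₀.surjective.eq_zero_of_comp ?_)
    fun v y' hy => ?_, fun v z => ?_⟩
  · obtain ⟨x, rfl⟩ := S₀.surjective v x'
    obtain ⟨e, he⟩ := Sq.exists_apply_eq ((hi' v x).symm.trans hx)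
    rw [← S.injective v he]
    exact Hom.congr_apply S₀.comp_eq_zero v e
  · ext v x
    simpa [hi', hp'] using Hom.congr_apply S.comp_eq_zero v x
  · obtain ⟨y, rfl⟩ := Sq.surjective v y'
    obtain ⟨x, rfl⟩ := S.exists_apply_eq ((hp' v y).symm.trans hy)
    exact ⟨p₀ v x, hi' v x⟩
  · obtain ⟨y, rfl⟩ := S.surjective v z
    exact ⟨q v y, hp' v y⟩

/-- If `X` and `E` are subobjects of `Y` with `X ∩ E = 0`, then `X` embeds in `Y / E`, with
cokernel `(Y / X) / E`. -/
theorem ShortExact.quotient_of_comp {i : Hom X Y} {p : Hom Y Z} (S : ShortExact i p)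
    {f : Hom E Y} {q' : Hom Z C'} (S' : ShortExact (p ⊚ f) q') {q : Hom Y C}
    (Sq : ShortExact f q) : ∃ r : Hom C C', ShortExact (q ⊚ i) r := by
  obtain ⟨r, hr⟩ := Sq.exists_desc (q' ⊚ p) S'.comp_eq_zero
  replace hr v y : r v (q v y) = q' v (p v y) := Hom.congr_apply hr v y
  refine ⟨r, .of_comp_eq_zero (fun v x hx => ?_) (Hom.ext fun v x => ?_) fun v c hc => ?_,
    fun v c' => ?_⟩
  · obtain ⟨e, he⟩ := Sq.exists_apply_eq hx
    have he0 : e = 0 := (injective_iff_map_eq_zero _).mp (S'.injective v) e <| by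
      rw [Hom.comp_apply, he]
      exact Hom.congr_apply S.comp_eq_zero v x
    apply S.injective v
    rw [← he, he0, map_zero, map_zero]
  · have : p v (i v x) = 0 := Hom.congr_apply S.comp_eq_zero v x
    simp [hr, this]
  · obtain ⟨y, rfl⟩ := Sq.surjective v c
    obtain ⟨e, he⟩ := S'.exists_apply_eq ((hr v y).symm.trans hc)
    obtain ⟨x, hx⟩ := S.exists_apply_eq (y := y - f v e) (by simp [← he])
    have : q v (f v e) = 0 := Hom.congr_apply Sq.comp_eq_zero v e
    exact ⟨x, by simp [hx, this]⟩
  · obtain ⟨z, rfl⟩ := S'.surjective v c'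
    obtain ⟨y, rfl⟩ := S.surjective v z
    exact ⟨q v y, hr v y⟩

theorem ShortExact.shortExact_kernel {i : Hom X Y} {p : Hom Y Z} (S : ShortExact i p)
    {f : Hom Z C} {j : Hom k Y} (hj : IsKernel j (f ⊚ p)) {j' : Hom k' Z}
    (hj' : IsKernel j' f) : ∃ (u : Hom X k) (r : Hom k k'), ShortExact u r := by
  obtain ⟨u, hu⟩ := hj.exists_lift i <| Hom.ext fun v x =>
    (congrArg (f v) (Hom.congr_apply S.comp_eq_zero v x)).trans (map_zero _)
  obtain ⟨r, hr⟩ := hj'.exists_lift (p ⊚ j) hj.comp_eq_zero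
  replace hu v x : j v (u v x) = i v x := Hom.congr_apply hu v x
  replace hr v x : j' v (r v x) = p v (j v x) := Hom.congr_apply hr v x
  refine ⟨u, r, .of_comp_eq_zero (fun v x hx => ?_) (hj'.injective.eq_zero_of_comp ?_)
    fun v x hx => ?_, fun v z => ?_⟩
  · apply S.injective v
    rw [← hu, hx, map_zero, map_zero]
  · ext v x
    simpa [hr, hu] using Hom.congr_apply S.comp_eq_zero v x
  · obtain ⟨y, hy⟩ := S.exists_apply_eq (y := j v x) (by rw [← hr, hx, map_zero])
    exact ⟨y, hj.injective v (by rw [hu, hy])⟩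
  · obtain ⟨y, hy⟩ := S.surjective v (j' v z)
    obtain ⟨x, rfl⟩ := hj.exists_apply_eq (y := y) <| by
      rw [Hom.comp_apply, hy]
      exact Hom.congr_apply hj'.comp_eq_zero v z
    exact ⟨x, hj'.injective v (by rw [hr, hy])⟩

/-- If `f` is injective on the subobject `X` of `Y`, the kernel of `f` is also the kernel of the
induced morphism `Y / X ⟶ C / f(X)`. -/
theorem ShortExact.isKernel_comp {i : Hom X Y} {p : Hom Y Z} (S : ShortExact i p)
    {f : Hom Y C} {q : Hom C C'} (Sq : ShortExact (f ⊚ i) q) {f' : Hom Z C'}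
    (hf' : f' ⊚ p = q ⊚ f) {j : Hom k Y} (hj : IsKernel j f) : IsKernel (p ⊚ j) f' := by
  replace hf' v y : f' v (p v y) = q v (f v y) := Hom.congr_apply hf' v y
  have hfj v x : f v (j v x) = 0 := Hom.congr_apply hj.comp_eq_zero v x
  refine .of_comp_eq_zero (fun v x hx => ?_) (Hom.ext fun v x => ?_) fun v z hz => ?_
  · obtain ⟨x', hx'⟩ := S.exists_apply_eq hx
    have hx0 : x' = 0 := (injective_iff_map_eq_zero _).mp (Sq.injective v) x' <| by
      rw [Hom.comp_apply, hx', hfj]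
    apply hj.injective v
    rw [← hx', hx0, map_zero, map_zero]
  · simp [hf', hfj]
  · obtain ⟨y, rfl⟩ := S.surjective v z
    obtain ⟨x, hx⟩ := Sq.exists_apply_eq ((hf' v y).symm.trans hz)
    obtain ⟨w, hw⟩ := hj.exists_apply_eq (y := y - i v x) (by simp [← hx])
    have : p v (i v x) = 0 := Hom.congr_apply S.comp_eq_zero v x
    exact ⟨w, by simp [hw, this]⟩

theorem ShortExact.smul_left {i : Hom X Y} {p : Hom Y Z} (S : ShortExact i p) {c : K}
    (hc : c ≠ 0) : ShortExact (c • i) p := by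
  refine ⟨.of_comp_eq_zero (fun v x hx => ?_) (Hom.ext fun v x => ?_) fun v y hy => ?_,
    S.surjective⟩
  · exact (injective_iff_map_eq_zero _).mp (S.injective v) x ((smul_eq_zero_iff_right hc).mp hx)
  · have : p v (i v x) = 0 := Hom.congr_apply S.comp_eq_zero v x
    simp [this]
  · obtain ⟨x, rfl⟩ := S.exists_apply_eq hy
    exact ⟨c⁻¹ • x, by simp [hc]⟩

end Diagrams

section Filtered

variable {K : Type} [Field K] {V A : Type} {t h : A → V} {ι : Type}

/-- The representations with a finite filtration whose subquotients are members of the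
family `E`. -/
inductive IsFiltered (E : ι → QuivRep K V A t h) : QuivRep K V A t h → Prop
  | zero (X : QuivRep K V A t h) (hX : ∀ v, Subsingleton (X.sp v)) : IsFiltered E X
  | ext {X X' : QuivRep K V A t h} {j : ι} {i : Hom (E j) X} {p : Hom X X'}
      (S : ShortExact i p) (hX' : IsFiltered E X') : IsFiltered E X

variable {E : ι → QuivRep K V A t h} {k X Y Z : QuivRep K V A t h}

namespace IsFiltered

theorem simple (E : ι → QuivRep K V A t h) (j : ι) : IsFiltered E (E j) := by
  obtain ⟨C, q, S⟩ := (Hom.injective_id (X := E j)).exists_cokernel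
  refine .ext S (.zero C fun v => subsingleton_of_forall_eq 0 fun c => ?_)
  obtain ⟨x, rfl⟩ := S.surjective v c
  exact Hom.congr_apply S.comp_eq_zero v x

theorem exists_dimVec_eq [Fintype ι] (hX : IsFiltered E X) :
    ∃ n : ι → ℕ, X.dimVec = ∑ j, n j • (E j).dimVec := by
  classical
  induction hX with
  | zero X hX =>
    refine ⟨0, funext fun v => ?_⟩
    have := hX v
    simpa [dimVec] using Module.finrank_zero_of_subsingleton (R := K) (M := X.sp v)
  | @ext X X' j i p S _ ih =>
    obtain ⟨n, hn⟩ := ih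
    refine ⟨Pi.single j 1 + n, ?_⟩
    simp [S.dimVec_eq, hn, add_smul, Finset.sum_add_distrib, Pi.single_apply, ite_smul]

theorem of_bijective (hZ : IsFiltered E Z) {f : Hom Y Z} (hinj : f.Injective)
    (hsurj : f.Surjective) : IsFiltered E Y := by
  cases hZ with
  | zero _ hZ => exact .zero Y fun v => (hinj v).subsingleton
  | @ext _ Z' j i p S hZ' =>
    obtain ⟨g, rfl⟩ := hinj.exists_comp_eq i fun v x => hsurj v (i v x)
    refine .ext (i := g) (p := p ⊚ f) ⟨.of_comp_eq_zero (fun v x hx => ?_) S.comp_eq_zero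
      fun v y hy => ?_, S.surjective.comp hsurj⟩ hZ'
    · exact S.injective v (by simp [hx])
    · obtain ⟨x, hx⟩ := S.exists_apply_eq hy
      exact ⟨x, hinj v hx⟩

theorem extension (hZ : IsFiltered E Z) (hX : IsFiltered E X) {i : Hom X Y} {p : Hom Y Z}
    (S : ShortExact i p) : IsFiltered E Y := by
  induction hX generalizing Y with
  | zero X hX =>
    refine hZ.of_bijective (Hom.injective_of_apply_eq_zero fun v y hy => ?_) S.surjective
    obtain ⟨x, rfl⟩ := S.exists_apply_eq hy
    rw [(hX v).elim x 0, map_zero]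
  | ext S₀ _ ih =>
    obtain ⟨Y', q, Sq⟩ := (S.injective.comp S₀.injective).exists_cokernel
    obtain ⟨i', p', S'⟩ := S₀.third_iso S Sq
    exact .ext Sq (ih S')

theorem exists_cokernel [Finite V] (hE : IsOrthogonalBricks E) (hY : IsFiltered E Y) {j : ι}
    {f : Hom (E j) Y} (hf : f ≠ 0) :
    ∃ (C : QuivRep K V A t h) (q : Hom Y C), ShortExact f q ∧ IsFiltered E C := by
  induction hY with
  | zero Y hY => exact absurd (Hom.ext fun v x => (hY v).elim _ _) hf
  | @ext Y Y' m i p S hY' ih =>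
    by_cases hpf : p ⊚ f = 0
    · obtain ⟨g, rfl⟩ := S.exists_lift f hpf
      obtain rfl : j = m := by
        by_contra hjm
        refine hf (Hom.ext fun v x => ?_)
        simp [homDim_eq_zero_iff.mp (hE.homDim_eq_zero j m hjm) g]
      obtain ⟨c, rfl⟩ := (hE.isSchur j).exists_smul_id_eq g
      have hi : i ⊚ (c • Hom.id (E j)) = c • i := Hom.ext fun v x => by simp
      rw [hi] at hf ⊢
      exact ⟨Y', p, S.smul_left (left_ne_zero_of_smul hf), hY'⟩
    · obtain ⟨C', q', S', hC'⟩ := ih hpf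
      have hinj : f.Injective := fun v => .of_comp (S'.injective v)
      obtain ⟨C, q, Sq⟩ := hinj.exists_cokernel
      obtain ⟨r, Sr⟩ := S.quotient_of_comp S' Sq
      exact ⟨C, q, Sq, .ext Sr hC'⟩

theorem kernel [Finite V] (hE : IsOrthogonalBricks E) (hX : IsFiltered E X)
    (hY : IsFiltered E Y) {f : Hom X Y} {i : Hom k X} (hi : IsKernel i f) : IsFiltered E k := by
  induction hX generalizing k Y with
  | zero X hX => exact .zero k fun v => (hi.injective v).subsingleton
  | @ext X X' j ι p S _ ih =>
    by_cases hfι : f ⊚ ι = 0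
    · obtain ⟨f', rfl⟩ := S.exists_desc f hfι
      obtain ⟨k', i', hi'⟩ := exists_isKernel f'
      obtain ⟨u, r, Sk⟩ := S.shortExact_kernel hi hi'
      exact .ext Sk (ih hY hi')
    · obtain ⟨C, q, Sq, hC⟩ := hY.exists_cokernel hE hfι
      obtain ⟨f', hf'⟩ := S.exists_desc (q ⊚ f) Sq.comp_eq_zero
      exact ih hC (S.isKernel_comp Sq hf' hi)

end IsFiltered

end Filtered

end QuivRep

section Algebra

theorem exists_mul_self_mul_eq (S : Type) [CommRing S] [IsArtinianRing S] [IsReduced S] (x : S) :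
    ∃ y, x * x * y = x := by
  obtain ⟨n, y, hy⟩ := IsArtinian.exists_pow_succ_smul_dvd x (1 : S)
  refine ⟨y, sub_eq_zero.mp (eq_zero_of_pow_eq_zero (n := n + 1) ?_)⟩
  have factor : x * x * y - x = x * (x * y - 1) := by ring
  have kill : x ^ n * (x * y - 1) = 0 := by
    simp only [smul_eq_mul, mul_one, Nat.succ_eq_add_one, pow_succ] at hy
    rw [← sub_eq_zero.mpr hy]
    ring
  rw [factor, mul_pow, pow_succ, pow_succ',
    show x ^ n * x * ((x * y - 1) * (x * y - 1) ^ n) =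
      x ^ n * (x * y - 1) * (x * (x * y - 1) ^ n) by ring, kill, zero_mul]

theorem isField_of_isIdempotentElem (S : Type) [CommRing S] [IsArtinianRing S] [IsReduced S]
    [Nontrivial S] (hidem : ∀ e : S, IsIdempotentElem e → e = 0 ∨ e = 1) : IsField S where
  exists_pair_ne := exists_pair_ne S
  mul_comm := mul_comm
  mul_inv_cancel := by
    intro x hx
    obtain ⟨y, hy⟩ := exists_mul_self_mul_eq S x
    refine ⟨y, (hidem (x * y) ?_).resolve_left fun hxy => hx ?_⟩
    · rw [IsIdempotentElem, ← mul_assoc, mul_right_comm x y x, hy]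
    · rw [← hy, mul_assoc, hxy, mul_zero]

theorem algebraMap_surjective_of_isIdempotentElem {K : Type} [Field K] [IsAlgClosed K] {R : Type}
    [Ring R] [Algebra K R] [FiniteDimensional K R] [Nontrivial R] [IsReduced R]
    (hidem : ∀ e : R, IsIdempotentElem e → e = 0 ∨ e = 1) :
    Function.Surjective (algebraMap K R) := by
  intro a
  let S := Algebra.adjoin K {a}
  have : IsArtinianRing S := .of_finite K S
  have : IsReduced S := isReduced_of_injective S.val Subtype.val_injective
  have hS : IsField S := isField_of_isIdempotentElem S fun e he =>
    (hidem e (congrArg Subtype.val he)).imp Subtype.ext Subtype.ext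
  have := hS.isDomain
  obtain ⟨c, hc⟩ := (IsAlgClosed.algebraMap_bijective_of_isIntegral (k := K) (K := S)).surjective
    (⟨a, Algebra.self_mem_adjoin_singleton K a⟩ : S)
  exact ⟨c, congrArg Subtype.val hc⟩

end Algebra

namespace QuivRep

section Indecomposable

variable {K : Type} [Field K] {V A : Type} {t h : A → V} {X Y Z : QuivRep K V A t h}

theorem dimVec_eq_zero_iff : X.dimVec = 0 ↔ Hom.id X = 0 := by
  constructor
  · refine fun H => Hom.ext fun v x => ?_
    have := Module.finrank_zero_iff.mp (congrFun H v)
    exact Subsingleton.elim (α := X.sp v) _ _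
  · refine fun H => funext fun v => ?_
    have : Subsingleton (X.sp v) := subsingleton_of_forall_eq 0 (Hom.congr_apply H v)
    exact Module.finrank_zero_of_subsingleton

/-- Indecomposable representations: nonzero, and without nontrivial idempotent endomorphisms. -/
structure IsIndecomposable (X : QuivRep K V A t h) : Prop where
  id_ne_zero : Hom.id X ≠ 0
  eq_zero_or_eq_id (e : Hom X X) (he : e ⊚ e = e) : e = 0 ∨ e = Hom.id X

/-- The endomorphism algebra of a representation. -/
def endAlgebra (X : QuivRep K V A t h) : Subalgebra K (∀ v, Module.End K (X.sp v)) where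
  carrier := homS X X
  mul_mem' {f g} hf hg := (Hom.comp (⟨f, hf⟩ : Hom X X) ⟨g, hg⟩).2
  add_mem' := (homS X X).add_mem
  algebraMap_mem' c a := by
    ext x
    simp [Module.algebraMap_end_apply]

theorem IsIndecomposable.isSchur [Finite V] [IsAlgClosed K] (hX : X.IsIndecomposable)
    (hsq : ∀ f : Hom X X, f ⊚ f = 0 → f = 0) : IsSchur X := by
  have : Nontrivial (endAlgebra X) := ⟨0, 1, fun H => hX.id_ne_zero <|
    Subtype.ext (congrArg Subtype.val H).symm⟩
  have : IsReduced (endAlgebra X) := (isReduced_iff_pow_one_lt 2 one_lt_two).mpr fun f hf =>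
    Subtype.ext <| congrArg Subtype.val <| hsq ⟨f, f.2⟩ <| Subtype.ext <|
      congrArg Subtype.val ((sq f).symm.trans hf)
  have scalar := algebraMap_surjective_of_isIdempotentElem (K := K) (R := endAlgebra X)
    fun e he => (hX.eq_zero_or_eq_id ⟨e, e.2⟩ (Subtype.ext (congrArg Subtype.val he))).imp
      (fun H => Subtype.ext (congrArg Subtype.val H)) fun H => Subtype.ext (congrArg Subtype.val H)
  refine (finrank_eq_one_iff_of_nonzero' _ hX.id_ne_zero).mpr fun f => ?_
  obtain ⟨c, hc⟩ := scalar ⟨f, f.2⟩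
  refine ⟨c, Hom.ext fun v x => ?_⟩
  rw [← show (algebraMap K (∀ v, Module.End K (X.sp v)) c) = f from congrArg Subtype.val hc]
  rfl

end Indecomposable

section Biproduct

variable {K : Type} [Field K] {V A : Type} {t h : A → V} {W X X₁ X₂ Y Z : QuivRep K V A t h}

/-- `X` is the direct sum of `X₁` and `X₂`, with the given inclusions and projections. -/
structure IsBiproduct (i₁ : Hom X₁ X) (p₁ : Hom X X₁) (i₂ : Hom X₂ X) (p₂ : Hom X X₂) :
    Prop where
  fst_inl : p₁ ⊚ i₁ = Hom.id X₁
  snd_inr : p₂ ⊚ i₂ = Hom.id X₂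
  snd_inl : p₂ ⊚ i₁ = 0
  fst_inr : p₁ ⊚ i₂ = 0
  total : i₁ ⊚ p₁ + i₂ ⊚ p₂ = Hom.id X

theorem Hom.injective_of_comp_eq_id {i : Hom X Y} {p : Hom Y X} (H : p ⊚ i = Hom.id X) :
    i.Injective := fun v => Function.LeftInverse.injective (g := p v) (Hom.congr_apply H v)

theorem Hom.surjective_of_comp_eq_id {i : Hom X Y} {p : Hom Y X} (H : p ⊚ i = Hom.id X) :
    p.Surjective := fun v => Function.RightInverse.surjective (g := i v) (Hom.congr_apply H v)

theorem isKernel_id_sub_of_comp_eq_id {i : Hom X Y} {p : Hom Y X} (H : p ⊚ i = Hom.id X) :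
    IsKernel i (Hom.id Y - i ⊚ p) := by
  have hpi v x : p v (i v x) = x := Hom.congr_apply H v x
  exact ⟨Hom.injective_of_comp_eq_id H, fun v y =>
    ⟨fun hy => ⟨p v y, (sub_eq_zero.mp hy).symm⟩, by rintro ⟨x, rfl⟩; simp [hpi]⟩⟩

theorem exists_comp_eq_id_of_idempotent {e : Hom X X} (he : e ⊚ e = e) :
    ∃ (Z : QuivRep K V A t h) (i : Hom Z X) (p : Hom X Z), p ⊚ i = Hom.id Z ∧ i ⊚ p = e := by
  obtain ⟨Z, p, i, hp, hi, rfl⟩ := exists_image e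
  refine ⟨Z, i, p, Hom.ext fun v z => ?_, rfl⟩
  obtain ⟨x, rfl⟩ := hp v z
  exact hi v (Hom.congr_apply he v x)

theorem exists_isBiproduct_of_comp_eq_id {i₁ : Hom X₁ X} {p₁ : Hom X X₁}
    (H : p₁ ⊚ i₁ = Hom.id X₁) : ∃ (X₂ : QuivRep K V A t h) (i₂ : Hom X₂ X) (p₂ : Hom X X₂),
      IsBiproduct i₁ p₁ i₂ p₂ := by
  have H' v x : p₁ v (i₁ v x) = x := Hom.congr_apply H v x
  obtain ⟨X₂, i₂, p₂, hpi, hip⟩ := exists_comp_eq_id_of_idempotent (e := Hom.id X - i₁ ⊚ p₁)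
    (Hom.ext fun v x => by simp [H'])
  have hip' v x : i₂ v (p₂ v x) = x - i₁ v (p₁ v x) := Hom.congr_apply hip v x
  have hpi' v x : p₂ v (i₂ v x) = x := Hom.congr_apply hpi v x
  refine ⟨X₂, i₂, p₂, H, hpi, (Hom.injective_of_comp_eq_id hpi).eq_zero_of_comp ?_,
    (Hom.injective_of_comp_eq_id H).eq_zero_of_comp ?_, ?_⟩
  · ext v x
    simp [hip', H']
  · ext v x
    simpa [hpi'] using (hip' v (i₂ v x)).symm
  · rw [hip, add_sub_cancel]

variable {i₁ : Hom X₁ X} {p₁ : Hom X X₁} {i₂ : Hom X₂ X} {p₂ : Hom X X₂}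

theorem IsBiproduct.apply_add_apply (H : IsBiproduct i₁ p₁ i₂ p₂) (v : V) (x : X.sp v) :
    i₁ v (p₁ v x) + i₂ v (p₂ v x) = x := Hom.congr_apply H.total v x

theorem IsBiproduct.shortExact (H : IsBiproduct i₁ p₁ i₂ p₂) : ShortExact i₁ p₂ where
  injective := Hom.injective_of_comp_eq_id H.fst_inl
  surjective := Hom.surjective_of_comp_eq_id H.snd_inr
  exact v x := by
    refine ⟨fun hx => ⟨p₁ v x, ?_⟩, ?_⟩
    · simpa [hx] using H.apply_add_apply v x
    · rintro ⟨y, rfl⟩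
      exact Hom.congr_apply H.snd_inl v y

theorem IsBiproduct.homDim_add_le_left [Finite V] (H : IsBiproduct i₁ p₁ i₂ p₂)
    (Y : QuivRep K V A t h) : homDim X₁ Y + homDim X₂ Y ≤ homDim X Y := by
  rw [homDim, homDim, ← Module.finrank_prod]
  refine LinearMap.finrank_le_finrank_of_injective
    (f := (Hom.precomp p₁ Y).coprod (Hom.precomp p₂ Y)) ?_
  refine (injective_iff_map_eq_zero _).mpr fun ⟨f₁, f₂⟩ hf => ?_
  replace hf v x : f₁ v (p₁ v x) + f₂ v (p₂ v x) = 0 := Hom.congr_apply hf v x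
  refine Prod.ext (Hom.ext fun v x => ?_) (Hom.ext fun v x => ?_)
  · have h₁ : p₁ v (i₁ v x) = x := Hom.congr_apply H.fst_inl v x
    have h₂ : p₂ v (i₁ v x) = 0 := Hom.congr_apply H.snd_inl v x
    simpa [h₁, h₂] using hf v (i₁ v x)
  · have h₁ : p₁ v (i₂ v x) = 0 := Hom.congr_apply H.fst_inr v x
    have h₂ : p₂ v (i₂ v x) = x := Hom.congr_apply H.snd_inr v x
    simpa [h₁, h₂] using hf v (i₂ v x)

theorem IsBiproduct.homDim_add_le_right [Finite V] (H : IsBiproduct i₁ p₁ i₂ p₂)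
    (Y : QuivRep K V A t h) : homDim Y X₁ + homDim Y X₂ ≤ homDim Y X := by
  rw [homDim, homDim, ← Module.finrank_prod]
  refine LinearMap.finrank_le_finrank_of_injective
    (f := (Hom.postcomp Y i₁).coprod (Hom.postcomp Y i₂)) ?_
  refine (injective_iff_map_eq_zero _).mpr fun ⟨f₁, f₂⟩ hf => ?_
  replace hf v x : i₁ v (f₁ v x) + i₂ v (f₂ v x) = 0 := Hom.congr_apply hf v x
  have fst_inl v x : p₁ v (i₁ v x) = x := Hom.congr_apply H.fst_inl v x
  have snd_inl v x : p₂ v (i₁ v x) = 0 := Hom.congr_apply H.snd_inl v x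
  have fst_inr v x : p₁ v (i₂ v x) = 0 := Hom.congr_apply H.fst_inr v x
  have snd_inr v x : p₂ v (i₂ v x) = x := Hom.congr_apply H.snd_inr v x
  refine Prod.ext (Hom.ext fun v x => ?_) (Hom.ext fun v x => ?_)
  · simpa [fst_inl, fst_inr] using congrArg (p₁ v) (hf v x)
  · simpa [snd_inl, snd_inr] using congrArg (p₂ v) (hf v x)

end Biproduct

section TotalDimension

variable {K : Type} [Field K] {V A : Type} [Fintype V] {t h : A → V} {X Y : QuivRep K V A t h}

/-- The total dimension `∑ᵥ dim X(v)`, the measure for inductions on representations. -/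
def totalDim (X : QuivRep K V A t h) : ℕ := ∑ v, X.dimVec v

theorem totalDim_pos (H : Hom.id X ≠ 0) : 0 < X.totalDim := by
  obtain ⟨v, x, hx⟩ := Hom.exists_apply_ne_zero H
  have : Nontrivial (X.sp v) := ⟨x, 0, hx⟩
  exact Finset.sum_pos' (fun _ _ => Nat.zero_le _) ⟨v, Finset.mem_univ v, Module.finrank_pos⟩

theorem ShortExact.totalDim_eq {Z : QuivRep K V A t h} {i : Hom X Y} {p : Hom Y Z}
    (S : ShortExact i p) : Y.totalDim = X.totalDim + Z.totalDim := by
  simp only [totalDim, S.dimVec_eq, Pi.add_apply, Finset.sum_add_distrib]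

theorem Hom.Injective.totalDim_le {f : Hom X Y} (hf : f.Injective) : X.totalDim ≤ Y.totalDim :=
  Finset.sum_le_sum fun v _ => LinearMap.finrank_le_finrank_of_injective (hf v)

theorem Hom.Surjective.injective_of_totalDim_le {f : Hom X Y} (hf : f.Surjective)
    (H : X.totalDim ≤ Y.totalDim) : f.Injective := by
  have hle (v : V) : Y.dimVec v ≤ X.dimVec v := LinearMap.finrank_le_finrank_of_surjective (hf v)
  refine hf.injective_of_dimVec_eq (funext fun v => ?_)
  exact ((Finset.sum_eq_sum_iff_of_le fun v _ => hle v).mp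
    ((Finset.sum_le_sum fun v _ => hle v).antisymm H) v (Finset.mem_univ v)).symm

end TotalDimension

section ClosedUnderKernels

variable {K : Type} [Field K] {V A : Type} {t h : A → V}

/-- The objects satisfying `C` form a subcategory closed under kernels, hence under direct
summands. -/
def ClosedUnderKernels (C : QuivRep K V A t h → Prop) : Prop :=
  ∀ ⦃k X Y⦄ ⦃f : Hom X Y⦄ ⦃i : Hom k X⦄, C X → C Y → IsKernel i f → C k

variable {C : QuivRep K V A t h → Prop} {X Y Z : QuivRep K V A t h}

theorem ClosedUnderKernels.of_comp_eq_id (hC : ClosedUnderKernels C) (hX : C X) {i : Hom Z X}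
    {p : Hom X Z} (H : p ⊚ i = Hom.id Z) : C Z :=
  hC hX hX (isKernel_id_sub_of_comp_eq_id H)

theorem exists_isBiproduct_of_not_isIndecomposable (hX : Hom.id X ≠ 0)
    (hind : ¬ X.IsIndecomposable) : ∃ (X₁ X₂ : QuivRep K V A t h) (i₁ : Hom X₁ X)
      (p₁ : Hom X X₁) (i₂ : Hom X₂ X) (p₂ : Hom X X₂),
      IsBiproduct i₁ p₁ i₂ p₂ ∧ Hom.id X₁ ≠ 0 ∧ Hom.id X₂ ≠ 0 := by
  obtain ⟨e, he, he0, he1⟩ : ∃ e : Hom X X, e ⊚ e = e ∧ e ≠ 0 ∧ e ≠ Hom.id X := by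
    contrapose! hind
    exact ⟨hX, fun e he => or_iff_not_imp_left.mpr (hind e he)⟩
  obtain ⟨X₁, i₁, p₁, hpi, rfl⟩ := exists_comp_eq_id_of_idempotent he
  obtain ⟨X₂, i₂, p₂, H⟩ := exists_isBiproduct_of_comp_eq_id hpi
  refine ⟨X₁, X₂, i₁, p₁, i₂, p₂, H, fun H₁ => he0 (Hom.ext fun v x => ?_),
    fun H₂ => he1 (Hom.ext fun v x => ?_)⟩
  · simpa using congrArg (i₁ v) (Hom.congr_apply H₁ v (p₁ v x))
  · have : p₂ v x = 0 := Hom.congr_apply H₂ v (p₂ v x)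
    simpa [this] using H.apply_add_apply v x

theorem ClosedUnderKernels.induction [Finite V] (hC : ClosedUnderKernels C)
    {P : QuivRep K V A t h → Prop} (zero : ∀ X, Hom.id X = 0 → P X)
    (indecomposable : ∀ X, C X → X.IsIndecomposable → P X)
    (biproduct : ∀ ⦃X X₁ X₂⦄ ⦃i₁ : Hom X₁ X⦄ ⦃p₁ : Hom X X₁⦄ ⦃i₂ : Hom X₂ X⦄ ⦃p₂ : Hom X X₂⦄,
      IsBiproduct i₁ p₁ i₂ p₂ → P X₁ → P X₂ → P X) (hX : C X) : P X := by
  cases nonempty_fintype V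
  induction hd : X.totalDim using Nat.strong_induction_on generalizing X with
  | _ d IH =>
    subst hd
    by_cases hid : Hom.id X = 0
    · exact zero X hid
    by_cases hind : X.IsIndecomposable
    · exact indecomposable X hX hind
    obtain ⟨X₁, X₂, i₁, p₁, i₂, p₂, H, h₁, h₂⟩ :=
      exists_isBiproduct_of_not_isIndecomposable hid hind
    have hdim := H.shortExact.totalDim_eq
    have pos₁ := totalDim_pos h₁
    have pos₂ := totalDim_pos h₂
    exact biproduct H (IH _ (by omega) (hC.of_comp_eq_id hX H.fst_inl) rfl)
      (IH _ (by omega) (hC.of_comp_eq_id hX H.snd_inr) rfl)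

end ClosedUnderKernels

end QuivRep

namespace QuivRep

section Schur

variable {K : Type} [Field K] {V A : Type} {t h : A → V} {I J M X Y Z k : QuivRep K V A t h}

theorem IsKernel.comp_left {i : Hom k X} {f : Hom X Y} (hi : IsKernel i f) {g : Hom Y Z}
    (hg : g.Injective) : IsKernel i (g ⊚ f) where
  injective := hi.injective
  exact v x := (map_eq_zero_iff (g v) (hg v)).trans (hi.exact v x)

theorem Hom.id_ne_zero_of_comp_ne_zero {p : Hom X Y} {f : Hom Y Z} (H : f ⊚ p ≠ 0) :
    Hom.id Y ≠ 0 := fun hY => H <| Hom.ext fun v x => by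
  simpa using congrArg (f v) (Hom.congr_apply hY v (p v x))

/-- A nonzero square-zero endomorphism `i ⊚ p` of `M`, given by its factorization through its
image `I`. -/
structure IsSquareZeroFactorization (p : Hom M I) (i : Hom I M) : Prop where
  surjective : p.Surjective
  injective : i.Injective
  comp_eq_zero : p ⊚ i = 0
  id_ne_zero : Hom.id I ≠ 0

theorem exists_isSquareZeroFactorization {f : Hom M M} (hf : f ≠ 0) (hsq : f ⊚ f = 0) :
    ∃ (I : QuivRep K V A t h) (p : Hom M I) (i : Hom I M), IsSquareZeroFactorization p i := by
  obtain ⟨I, p, i, hp, hi, rfl⟩ := exists_image f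
  exact ⟨I, p, i, hp, hi, hp.eq_zero_of_comp (hi.eq_zero_of_comp hsq),
    Hom.id_ne_zero_of_comp_ne_zero hf⟩

theorem IsIndecomposable.extDim_ne_zero [Finite A] (hM : M.IsIndecomposable) {ι : Hom k M}
    {p : Hom M I} (S : ShortExact ι p) (hI : Hom.id I ≠ 0) {a : Hom Z k} {π : Hom k Z}
    (H : π ⊚ a = Hom.id Z) (hZ : Hom.id Z ≠ 0) : extDim I Z ≠ 0 := by
  intro hext
  obtain ⟨g, hg⟩ := S.exists_extend hext π
  replace H v z : π v (a v z) = z := Hom.congr_apply H v z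
  replace hg v x : g v (ι v x) = π v x := Hom.congr_apply hg v x
  rcases hM.eq_zero_or_eq_id ((ι ⊚ a) ⊚ g) (Hom.ext fun v x => by simp [hg, H]) with h0 | h1
  · refine hZ (Hom.ext fun v z => ?_)
    simpa [hg, H] using congrArg (g v) (Hom.congr_apply h0 v (ι v (a v z)))
  · refine hI (S.surjective.eq_zero_of_comp (Hom.ext fun v x => ?_))
    obtain ⟨x, rfl⟩ : ∃ y, ι v y = x := ⟨_, Hom.congr_apply h1 v x⟩
    exact Hom.congr_apply S.comp_eq_zero v x

variable {C : QuivRep K V A t h → Prop}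

theorem ClosedUnderKernels.exists_indecomposable_retract [Finite V] (hC : ClosedUnderKernels C)
    (hk : C k) {j : Hom I k} (hj : j ≠ 0) :
    ∃ (Z : QuivRep K V A t h) (a : Hom Z k) (π : Hom k Z),
      C Z ∧ Z.IsIndecomposable ∧ π ⊚ a = Hom.id Z ∧ π ⊚ j ≠ 0 := by
  refine hC.induction (P := fun k => ∀ j : Hom I k, j ≠ 0 → ∃ (Z : _) (a : Hom Z k)
    (π : Hom k Z), C Z ∧ Z.IsIndecomposable ∧ π ⊚ a = Hom.id Z ∧ π ⊚ j ≠ 0)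
    (fun X hX j hj => ?_) (fun X hX hind j hj => ⟨X, .id X, .id X, hX, hind, rfl, hj⟩)
    (fun X X₁ X₂ i₁ p₁ i₂ p₂ H IH₁ IH₂ j hj => ?_) hk j hj
  · exact absurd (Hom.ext fun v x => Hom.congr_apply hX v (j v x)) hj
  · by_cases h₁ : p₁ ⊚ j = 0
    · have h₂ : p₂ ⊚ j ≠ 0 := fun h₂ => hj <| Hom.ext fun v x => by
        have e₁ : p₁ v (j v x) = 0 := Hom.congr_apply h₁ v x
        have e₂ : p₂ v (j v x) = 0 := Hom.congr_apply h₂ v x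
        simpa [e₁, e₂] using (H.apply_add_apply v (j v x)).symm
      obtain ⟨Z, a, π, hZ, hind, hπa, hπj⟩ := IH₂ _ h₂
      refine ⟨Z, i₂ ⊚ a, π ⊚ p₂, hZ, hind, Hom.ext fun v z => ?_, hπj⟩
      exact (congrArg (π v) (Hom.congr_apply H.snd_inr v (a v z))).trans (Hom.congr_apply hπa v z)
    · obtain ⟨Z, a, π, hZ, hind, hπa, hπj⟩ := IH₁ _ h₁
      refine ⟨Z, i₁ ⊚ a, π ⊚ p₁, hZ, hind, Hom.ext fun v z => ?_, hπj⟩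
      exact (congrArg (π v) (Hom.congr_apply H.fst_inl v (a v z))).trans (Hom.congr_apply hπa v z)

/-- Choose the image `I` of minimal dimension. It embeds into `k = ker p`, and into some
indecomposable summand `Z` of `k`; then `ext(I, Z) ≤ ext(Z, Z) = 0`, so that the projection of `k`
to `Z` extends to `M` and `Z` splits off `M`. -/
theorem IsIndecomposable.not_isSquareZeroFactorization [Finite A] [Fintype V]
    (hM : M.IsIndecomposable) (hC : ClosedUnderKernels C) (hCM : C M)
    (hrigid : ∀ Z, C Z → Z.IsIndecomposable → Z.totalDim < M.totalDim → Z.IsRigid)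
    {p : Hom M I} {i : Hom I M} : ¬ IsSquareZeroFactorization p i := by
  induction hd : I.totalDim using Nat.strong_induction_on generalizing I with
  | _ d IH =>
    subst hd
    intro H
    obtain ⟨k, ι, S⟩ := H.surjective.exists_kernel
    obtain ⟨j, hj⟩ := S.exists_lift i H.comp_eq_zero
    have hj0 : j ≠ 0 := by
      rintro rfl
      refine H.id_ne_zero (H.injective.eq_zero_of_comp (Hom.ext fun v x => ?_))
      simpa using (Hom.congr_apply hj v x).symm
    obtain ⟨Z, a, π, hZ, hind, hπa, hπj⟩ := hC.exists_indecomposable_retract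
      (hC hCM hCM (S.comp_left H.injective)) hj0
    obtain ⟨J, q, c, hq, hc, hcq⟩ := exists_image (π ⊚ j)
    have ha := Hom.injective_of_comp_eq_id hπa
    have hJ : IsSquareZeroFactorization (q ⊚ p) ((ι ⊚ a) ⊚ c) :=
      ⟨hq.comp H.surjective, (S.injective.comp ha).comp hc, Hom.ext fun v x =>
        (congrArg (q v) (Hom.congr_apply S.comp_eq_zero v _)).trans (map_zero _),
        Hom.id_ne_zero_of_comp_ne_zero (hcq ▸ hπj)⟩
    have hIJ : I.totalDim ≤ J.totalDim := not_lt.mp fun hlt => IH _ hlt rfl hJ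
    have hIZ : (π ⊚ j).Injective := hcq ▸ hc.comp (hq.injective_of_totalDim_le hIJ)
    have hZM : Z.totalDim < M.totalDim := by
      have := S.totalDim_eq
      have := ha.totalDim_le
      have := totalDim_pos H.id_ne_zero
      omega
    refine hM.extDim_ne_zero S H.id_ne_zero hπa hind.id_ne_zero ?_
    exact Nat.le_zero.mp (hrigid Z hZ hind hZM ▸ hIZ.extDim_le Z)

/-- Over a subcategory on which the Euler form is positive, indecomposables are bricks by the
previous theorem, and `1 - ext(X, X) = ⟨X, X⟩ > 0`. -/
theorem IsIndecomposable.isExceptional [IsAlgClosed K] [Fintype V] [Fintype A]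
    (hX : X.IsIndecomposable) (hC : ClosedUnderKernels C)
    (hpos : ∀ X, C X → Hom.id X ≠ 0 → 0 < eulerForm t h (natZ X.dimVec) (natZ X.dimVec))
    (hCX : C X) : X.IsExceptional := by
  induction hd : X.totalDim using Nat.strong_induction_on generalizing X with
  | _ d IH =>
    subst hd
    have schur : X.IsSchur := hX.isSchur fun f hsq => by
      by_contra hf
      obtain ⟨I, p, i, H⟩ := exists_isSquareZeroFactorization hf hsq
      exact hX.not_isSquareZeroFactorization hC hCX
        (fun Z hZ hind hlt => (IH _ hlt hind hZ rfl).1) H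
    have ringel := homDim_sub_extDim X X
    have := hpos X hCX hX.id_ne_zero
    rw [schur] at ringel
    exact ⟨by rw [IsRigid]; omega, schur⟩

end Schur

end QuivRep

namespace QuivRep

section Exactness

variable {K : Type} [Field K] {V A : Type} {t h : A → V} {W X Y Z : QuivRep K V A t h}

theorem finrank_le_of_ker_le_range {M N P : Type} [AddCommGroup M] [Module K M]
    [FiniteDimensional K M] [AddCommGroup N] [Module K N] [FiniteDimensional K N]
    [AddCommGroup P] [Module K P] {f : M →ₗ[K] N} {g : N →ₗ[K] P}
    (H : LinearMap.ker g ≤ LinearMap.range f) :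
    Module.finrank K N ≤ Module.finrank K M + Module.finrank K (LinearMap.range g) := by
  have := g.finrank_range_add_finrank_ker
  have := Submodule.finrank_mono H
  have := f.finrank_range_le
  omega

theorem ShortExact.homDim_le_left [Finite V] {i : Hom X Y} {p : Hom Y Z} (S : ShortExact i p)
    (W : QuivRep K V A t h) : homDim Y W ≤ homDim X W + homDim Z W := by
  have := finrank_le_of_ker_le_range (f := Hom.precomp p W) (g := Hom.precomp i W)
    fun f hf => S.exists_desc f hf
  exact this.trans ((Nat.add_comm _ _).trans_le <|
    Nat.add_le_add_right (Submodule.finrank_le _) _)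

theorem IsKernel.homDim_le_add_finrank_range [Finite V] {i : Hom X Y} {p : Hom Y Z}
    (S : IsKernel i p) (W : QuivRep K V A t h) :
    homDim W Y ≤ homDim W X + Module.finrank K (LinearMap.range (Hom.postcomp W p)) :=
  finrank_le_of_ker_le_range (f := Hom.postcomp W i) fun f hf => S.exists_lift f hf

theorem IsKernel.homDim_le_right [Finite V] {i : Hom X Y} {p : Hom Y Z} (S : IsKernel i p)
    (W : QuivRep K V A t h) : homDim W Y ≤ homDim W X + homDim W Z :=
  (S.homDim_le_add_finrank_range W).trans (Nat.add_le_add_left (Submodule.finrank_le _) _)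

theorem ShortExact.homDim_lt_of_not_split [Finite V] {i : Hom X Y} {p : Hom Y Z}
    (S : ShortExact i p) (hp : ∀ s : Hom Z Y, p ⊚ s ≠ Hom.id Z) :
    homDim Z Y < homDim Z X + homDim Z Z := by
  refine (S.homDim_le_add_finrank_range Z).trans_lt (Nat.add_lt_add_left ?_ _)
  refine Submodule.finrank_lt fun H => ?_
  obtain ⟨s, hs⟩ := LinearMap.range_eq_top.mp H (Hom.id Z)
  exact hp s hs

theorem ShortExact.extDim_le_left [Finite V] [Finite A] {i : Hom X Y} {p : Hom Y Z}
    (S : ShortExact i p) (W : QuivRep K V A t h) : extDim Y W ≤ extDim X W + extDim Z W := by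
  cases nonempty_fintype V
  cases nonempty_fintype A
  have hom_le := S.homDim_le_left W
  have formula_Y := homDim_sub_extDim Y W
  rw [S.dimVec_eq, natZ_add, eulerForm_add_left, ← homDim_sub_extDim, ← homDim_sub_extDim]
    at formula_Y
  omega

theorem ShortExact.extDim_le_right [Finite V] [Finite A] {i : Hom X Y} {p : Hom Y Z}
    (S : ShortExact i p) (W : QuivRep K V A t h) : extDim W Y ≤ extDim W X + extDim W Z := by
  cases nonempty_fintype V
  cases nonempty_fintype A
  have hom_le := S.homDim_le_right W
  have formula_Y := homDim_sub_extDim W Y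
  rw [S.dimVec_eq, natZ_add, eulerForm_add_right, ← homDim_sub_extDim, ← homDim_sub_extDim]
    at formula_Y
  omega

/-- The extension of `Z` by `X` with cocycle `c`. -/
abbrev extensionOf (c : ∀ a : A, Z.sp (t a) →ₗ[K] X.sp (h a)) : QuivRep K V A t h where
  sp v := X.sp v × Z.sp v
  map a := ((X.map a).coprod (c a)).prod (Z.map a ∘ₗ .snd K _ _)

theorem shortExact_extensionOf (c : ∀ a : A, Z.sp (t a) →ₗ[K] X.sp (h a)) :
    ShortExact (Y := extensionOf c)
      (Hom.ofNatural (fun v => .inl K (X.sp v) (Z.sp v)) fun a x =>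
        Prod.ext (by simp) (by simp))
      (Hom.ofNatural (fun v => .snd K (X.sp v) (Z.sp v)) fun _ _ => rfl) where
  injective _ := LinearMap.inl_injective
  exact _ := .inl_snd
  surjective _ := LinearMap.snd_surjective

theorem exists_nonsplit_of_extDim_ne_zero [Finite A] (H : extDim Z X ≠ 0) :
    ∃ (Y : QuivRep K V A t h) (i : Hom X Y) (p : Hom Y Z), ShortExact i p ∧
      ∀ s : Hom Z Y, p ⊚ s ≠ Hom.id Z := by
  obtain ⟨c, hc⟩ : ∃ c, ∀ f, dmap Z X f ≠ c := by
    simpa [extDim_eq_zero_iff, Function.Surjective] using H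
  refine ⟨extensionOf c, _, _, shortExact_extensionOf c, fun s hs => hc
    (fun v => .fst K (X.sp v) (Z.sp v) ∘ₗ s v) (funext fun a => LinearMap.ext fun z => ?_)⟩
  have hsz : (s (t a) z).2 = z := Hom.congr_apply hs (t a) z
  have hs_map : (s (h a) (Z.map a z)).1 = X.map a (s (t a) z).1 + c a (s (t a) z).2 :=
    congrArg Prod.fst (s.naturality a z)
  rw [hsz] at hs_map
  exact sub_eq_iff_eq_add'.mpr hs_map

end Exactness

section Rigid

variable {K : Type} [Field K] {V A : Type} {t h : A → V} {X X₁ X₂ Y Z : QuivRep K V A t h}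

/-- There are no extensions between complementary direct summands of `X`. -/
def SummandsExtOrthogonal (X : QuivRep K V A t h) : Prop :=
  ∀ ⦃X₁ X₂⦄ ⦃i₁ : Hom X₁ X⦄ ⦃p₁ : Hom X X₁⦄ ⦃i₂ : Hom X₂ X⦄ ⦃p₂ : Hom X X₂⦄,
    IsBiproduct i₁ p₁ i₂ p₂ → extDim X₁ X₂ = 0

theorem IsBiproduct.symm {i₁ : Hom X₁ X} {p₁ : Hom X X₁} {i₂ : Hom X₂ X} {p₂ : Hom X X₂}
    (H : IsBiproduct i₁ p₁ i₂ p₂) : IsBiproduct i₂ p₂ i₁ p₁ :=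
  ⟨H.snd_inr, H.fst_inl, H.fst_inr, H.snd_inl, (add_comm _ _).trans H.total⟩

theorem SummandsExtOrthogonal.of_comp_eq_id [Finite A] (hX : X.SummandsExtOrthogonal)
    {i : Hom Y X} {p : Hom X Y} (hpi : p ⊚ i = Hom.id Y) : Y.SummandsExtOrthogonal := by
  intro Y₁ Y₂ i₁ p₁ i₂ p₂ H
  replace hpi v y : p v (i v y) = y := Hom.congr_apply hpi v y
  have fst_inl v y : p₁ v (i₁ v y) = y := Hom.congr_apply H.fst_inl v y
  have fst_inr v y : p₁ v (i₂ v y) = 0 := Hom.congr_apply H.fst_inr v y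
  have snd_inr v y : p₂ v (i₂ v y) = y := Hom.congr_apply H.snd_inr v y
  obtain ⟨X₂, j, q, HX⟩ := exists_isBiproduct_of_comp_eq_id (i₁ := i ⊚ i₁) (p₁ := p₁ ⊚ p)
    (Hom.ext fun v y => by simp [hpi, fst_inl])
  have surj : (p₂ ⊚ p ⊚ j).Surjective := fun v y => ⟨q v (i v (i₂ v y)), by
    have := HX.apply_add_apply v (i v (i₂ v y))
    simp only [Hom.comp_apply, hpi, fst_inr, map_zero, zero_add] at this
    simp [this, hpi, snd_inr]⟩
  exact Nat.le_zero.mp (hX HX ▸ surj.extDim_le Y₁)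

theorem IsBiproduct.extDim_le [Finite V] [Finite A] {i₁ : Hom X₁ X} {p₁ : Hom X X₁}
    {i₂ : Hom X₂ X} {p₂ : Hom X X₂} (H : IsBiproduct i₁ p₁ i₂ p₂) :
    extDim X X ≤ (extDim X₁ X₁ + extDim X₁ X₂) + (extDim X₂ X₁ + extDim X₂ X₂) :=
  (H.shortExact.extDim_le_left X).trans <| Nat.add_le_add (H.shortExact.extDim_le_right X₁)
    (H.shortExact.extDim_le_right X₂)

theorem IsBiproduct.homDim_add_le [Finite V] {i₁ : Hom X₁ X} {p₁ : Hom X X₁}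
    {i₂ : Hom X₂ X} {p₂ : Hom X X₂} (H : IsBiproduct i₁ p₁ i₂ p₂) :
    (homDim X₁ X₁ + homDim X₁ X₂) + (homDim X₂ X₁ + homDim X₂ X₂) ≤ homDim X X :=
  (Nat.add_le_add (H.homDim_add_le_right X₁) (H.homDim_add_le_right X₂)).trans
    (H.homDim_add_le_left X)

variable {C : QuivRep K V A t h → Prop}

/-- The objects satisfying `C` form a subcategory closed under extensions. -/
def ClosedUnderExtensions (C : QuivRep K V A t h → Prop) : Prop :=
  ∀ ⦃X Y Z⦄ ⦃i : Hom X Y⦄ ⦃p : Hom Y Z⦄, C X → C Z → ShortExact i p → C Y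

theorem SummandsExtOrthogonal.isRigid [Finite V] [Finite A] (hC : ClosedUnderKernels C)
    (hind : ∀ X, C X → X.IsIndecomposable → X.IsRigid) (hX : C X)
    (hortho : X.SummandsExtOrthogonal) : X.IsRigid := by
  refine hC.induction (P := fun X => X.SummandsExtOrthogonal → X.IsRigid)
    (fun X hid _ => ?_) (fun X hCX hX _ => hind X hCX hX)
    (fun X X₁ X₂ i₁ p₁ i₂ p₂ H IH₁ IH₂ hortho => ?_) hX hortho
  · refine extDim_eq_zero_iff.mpr fun c => ⟨0, funext fun a => LinearMap.ext fun x => ?_⟩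
    have hx : x = 0 := Hom.congr_apply hid (t a) x
    rw [hx, map_zero, map_zero]
  · have := H.extDim_le
    rw [hortho H, hortho H.symm, IH₁ (hortho.of_comp_eq_id H.fst_inl),
      IH₂ (hortho.of_comp_eq_id H.snd_inr)] at this
    exact Nat.le_zero.mp this

/-- A nonsplit extension between the summands `X₁` and `X₂` is a degeneration in reverse: it has
fewer endomorphisms than `X₁ ⊕ X₂`. -/
theorem IsBiproduct.exists_homDim_lt [Finite V] [Finite A] (hC : ClosedUnderKernels C)
    (hC' : ClosedUnderExtensions C) (hX : C X) {i₁ : Hom X₁ X} {p₁ : Hom X X₁} {i₂ : Hom X₂ X}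
    {p₂ : Hom X X₂} (H : IsBiproduct i₁ p₁ i₂ p₂) (hext : extDim X₁ X₂ ≠ 0) :
    ∃ N, C N ∧ N.dimVec = X.dimVec ∧ homDim N N < homDim X X := by
  obtain ⟨N, i, p, S, hsplit⟩ := exists_nonsplit_of_extDim_ne_zero hext
  refine ⟨N, hC' (hC.of_comp_eq_id hX H.snd_inr) (hC.of_comp_eq_id hX H.fst_inl) S, ?_, ?_⟩
  · rw [S.dimVec_eq, H.shortExact.dimVec_eq, add_comm]
  · have := H.homDim_add_le
    have := S.homDim_le_left N
    have := S.homDim_le_right X₂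
    have := S.homDim_lt_of_not_split hsplit
    omega

theorem ClosedUnderExtensions.exists_isRigid [Finite V] [Finite A]
    (hC' : ClosedUnderExtensions C) (hC : ClosedUnderKernels C)
    (hind : ∀ X, C X → X.IsIndecomposable → X.IsRigid) (hX : C X) :
    ∃ Y, C Y ∧ Y.dimVec = X.dimVec ∧ Y.IsRigid := by
  induction hd : homDim X X using Nat.strong_induction_on generalizing X with
  | _ d IH =>
    subst hd
    by_cases hortho : X.SummandsExtOrthogonal
    · exact ⟨X, hX, rfl, hortho.isRigid hC hind hX⟩
    obtain ⟨X₁, X₂, i₁, p₁, i₂, p₂, H, hext⟩ : ∃ (X₁ X₂ : _) (i₁ : Hom X₁ X) (p₁ : Hom X X₁)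
        (i₂ : Hom X₂ X) (p₂ : Hom X X₂), IsBiproduct i₁ p₁ i₂ p₂ ∧ extDim X₁ X₂ ≠ 0 := by
      simpa [SummandsExtOrthogonal] using hortho
    obtain ⟨N, hN, hdim, hlt⟩ := H.exists_homDim_lt hC hC' hX hext
    rw [← hdim]
    exact IH _ hlt hN rfl

theorem IsRigid.extDim_eq_zero_of_comp_eq_id [Finite A] (hX : X.IsRigid) {i : Hom Y X}
    {p : Hom X Y} (hY : p ⊚ i = Hom.id Y) {j : Hom Z X} {q : Hom X Z}
    (hZ : q ⊚ j = Hom.id Z) : extDim Y Z = 0 :=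
  Nat.le_zero.mp <| hX ▸ ((Hom.injective_of_comp_eq_id hY).extDim_le Z).trans
    ((Hom.surjective_of_comp_eq_id hZ).extDim_le X)

theorem ClosedUnderKernels.exists_indecomposable_summands [Finite V] (hC : ClosedUnderKernels C)
    (hX : C X) : ∃ L : Multiset (QuivRep K V A t h), (L.map dimVec).sum = X.dimVec ∧
      ∀ Z ∈ L, C Z ∧ Z.IsIndecomposable ∧ ∃ (i : Hom Z X) (p : Hom X Z), p ⊚ i = Hom.id Z := by
  refine hC.induction (P := fun X => ∃ L : Multiset (QuivRep K V A t h),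
    (L.map dimVec).sum = X.dimVec ∧ ∀ Z ∈ L, C Z ∧ Z.IsIndecomposable ∧
      ∃ (i : Hom Z X) (p : Hom X Z), p ⊚ i = Hom.id Z) (fun X hX => ?_) (fun X hX hind => ?_)
    (fun X X₁ X₂ i₁ p₁ i₂ p₂ H => ?_) hX
  · exact ⟨0, by simp [dimVec_eq_zero_iff.mpr hX], by simp⟩
  · refine ⟨{X}, by simp, fun Z hZ => ?_⟩
    obtain rfl := Multiset.mem_singleton.mp hZ
    exact ⟨hX, hind, .id Z, .id Z, rfl⟩
  · rintro ⟨L₁, sum₁, hL₁⟩ ⟨L₂, sum₂, hL₂⟩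
    refine ⟨L₁ + L₂, by simp [sum₁, sum₂, H.shortExact.dimVec_eq], fun Z hZ => ?_⟩
    rcases Multiset.mem_add.mp hZ with hZ | hZ
    · obtain ⟨hCZ, hind, i, p, hpi⟩ := hL₁ Z hZ
      refine ⟨hCZ, hind, i₁ ⊚ i, p ⊚ p₁, Hom.ext fun v z => ?_⟩
      exact (congrArg (p v) (Hom.congr_apply H.fst_inl v (i v z))).trans (Hom.congr_apply hpi v z)
    · obtain ⟨hCZ, hind, i, p, hpi⟩ := hL₂ Z hZ
      refine ⟨hCZ, hind, i₂ ⊚ i, p ⊚ p₂, Hom.ext fun v z => ?_⟩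
      exact (congrArg (p v) (Hom.congr_apply H.snd_inr v (i v z))).trans (Hom.congr_apply hpi v z)

end Rigid

end QuivRep

section PositiveDefinite

variable {F : Type*} [Field F] [LinearOrder F] [IsStrictOrderedRing F]

theorem exists_sq_le_mul_apply_self {W : Type*} [AddCommGroup W] [Module F W]
    [FiniteDimensional F W] {B : LinearMap.BilinForm F W} (hB : ∀ x, x ≠ 0 → 0 < B x x)
    (φ : Module.Dual F W) : ∃ c, ∀ x, φ x ^ 2 ≤ c * B x x := by
  let S := B + B.flip
  have apply_self (x : W) : S x x = 2 * B x x := (two_mul _).symm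
  have pos {x : W} (hx : x ≠ 0) : 0 < S x x := by
    rw [apply_self]
    exact mul_pos two_pos (hB x hx)
  have nonneg (x : W) : 0 ≤ S x x := by
    rcases eq_or_ne x 0 with rfl | hx
    · simp
    · exact (pos hx).le
  have symm : LinearMap.IsSymm S := ⟨fun x y => add_comm _ _⟩
  have inj : Function.Injective S := (injective_iff_map_eq_zero S).mpr fun x hx => by
    by_contra hx0
    exact (pos hx0).ne' (by rw [hx, LinearMap.zero_apply])
  obtain ⟨w, rfl⟩ := (LinearMap.injective_iff_surjective_of_finrank_eq_finrank
    Subspace.dual_finrank_eq.symm).mp inj φ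
  refine ⟨S w w * 2, fun x => ?_⟩
  rw [mul_assoc, ← apply_self]
  exact LinearMap.BilinForm.apply_sq_le_of_symm S nonneg symm w x

theorem finite_setOf_natCast_apply_self_le [FloorSemiring F] {ι : Type*} [Finite ι]
    {B : LinearMap.BilinForm F (ι → F)} (hB : ∀ x, x ≠ 0 → 0 < B x x) (r : F) :
    {n : ι → ℕ | B (fun i => n i) (fun i => n i) ≤ r}.Finite := by
  classical
  cases nonempty_fintype ι
  choose c hc using fun i : ι => exists_sq_le_mul_apply_self hB (LinearMap.proj i)
  refine (Set.finite_Iic fun i => ⌈|c i| * r⌉₊).subset fun n hn i => ?_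
  set q := B (fun i => (n i : F)) (fun i => n i) with q_def
  have hq : 0 ≤ q := by
    rcases eq_or_ne (fun i => (n i : F)) 0 with h0 | h0
    · simp [q_def, h0]
    · exact (hB _ h0).le
  have sq_le : (n i : F) ^ 2 ≤ |c i| * r := calc
    (n i : F) ^ 2 ≤ c i * q := hc i fun i => (n i : F)
    _ ≤ |c i| * q := mul_le_mul_of_nonneg_right (le_abs_self _) hq
    _ ≤ |c i| * r := mul_le_mul_of_nonneg_left hn (abs_nonneg _)
  have le_sq : (n i : F) ≤ (n i : F) ^ 2 := mod_cast Nat.le_self_pow two_ne_zero (n i)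
  exact_mod_cast (le_sq.trans sq_le).trans (Nat.le_ceil _)

end PositiveDefinite

theorem intQ_natZ_sum_nsmul {V ι : Type} [Fintype ι] (b : ι → V → ℕ) (n : ι → ℕ) :
    intQ (natZ (∑ j, n j • b j)) = ∑ j, (n j : ℚ) • intQ (natZ (b j)) := by
  ext v
  simp [intQ, natZ]

section TitsForm

variable {V A : Type} [Fintype V] [Fintype A] {t h : A → V} {ι : Type} [Fintype ι]

theorem intCast_eulerForm (x y : V → ℤ) :
    ((eulerForm t h x y : ℤ) : ℚ) = eulerForm t h (intQ x) (intQ y) := by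
  simp [eulerForm, intQ]

/-- The pullback of the Euler form along `η ↦ ∑ i, η i • b i`. If every `b i` has Euler norm one,
its quadratic form is the Tits form of the Ext-quiver of `b`. -/
def titsBilin (t h : A → V) (b : ι → V → ℕ) : LinearMap.BilinForm ℚ (ι → ℚ) :=
  (eulerBilin t h ℚ).compl₁₂ (Fintype.linearCombination ℚ fun i => intQ (natZ (b i)))
    (Fintype.linearCombination ℚ fun i => intQ (natZ (b i)))

theorem titsBilin_natCast (b : ι → V → ℕ) (n : ι → ℕ) :
    titsBilin t h b (fun i => n i) (fun i => n i) =
      ((eulerForm t h (natZ (∑ i, n i • b i)) (natZ (∑ i, n i • b i)) : ℤ) : ℚ) := by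
  rw [intCast_eulerForm, intQ_natZ_sum_nsmul]
  rfl

theorem titsBilin_apply_self [DecidableEq ι] {b : ι → V → ℕ}
    (hb : ∀ i, eulerForm t h (natZ (b i)) (natZ (b i)) = 1) (η : ι → ℚ) :
    titsBilin t h b η η = (∑ i, η i ^ 2) + ∑ i, ∑ j, (if i = j then 0 else
      ((eulerForm t h (natZ (b i)) (natZ (b j)) : ℤ) : ℚ) * η i * η j) := by
  have expand : titsBilin t h b η η =
      ∑ i, ∑ j, ((eulerForm t h (natZ (b i)) (natZ (b j)) : ℤ) : ℚ) * η i * η j := by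
    simp only [titsBilin, LinearMap.compl₁₂_apply, Fintype.linearCombination_apply]
    rw [LinearMap.map_sum₂]
    refine Finset.sum_congr rfl fun i _ => ?_
    rw [LinearMap.map_smul₂, smul_eq_mul, map_sum, Finset.mul_sum]
    refine Finset.sum_congr rfl fun j _ => ?_
    rw [map_smul, eulerBilin_apply, intCast_eulerForm, smul_eq_mul]
    ring
  rw [expand, ← Finset.sum_add_distrib]
  refine Finset.sum_congr rfl fun i _ => ?_
  rw [← Finset.add_sum_erase _ _ (Finset.mem_univ i), hb, Int.cast_one, one_mul, ← sq,
    ← Finset.add_sum_erase _ (fun j => if i = j then 0 else _) (Finset.mem_univ i), if_pos rfl,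
    zero_add]
  exact congrArg _ (Finset.sum_congr rfl fun j hj => (if_neg (Finset.ne_of_mem_erase hj).symm).symm)

end TitsForm

section Cone

variable {V : Type}

theorem natZ_injective : Function.Injective (natZ : (V → ℕ) → V → ℤ) :=
  Nat.cast_injective.comp_left

theorem coneOf_eq_hull (C : Finset (V → ℤ)) :
    coneOf C = (PointedCone.hull ℚ (intQ '' (C : Set (V → ℤ))) : Set (V → ℚ)) := by
  ext x
  rw [SetLike.mem_coe, Submodule.mem_span_image_finset_iff_exists_fun']
  constructor
  · rintro ⟨lam, nonneg, rfl⟩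
    exact ⟨fun c => ⟨lam c, nonneg c⟩, rfl⟩
  · rintro ⟨lam, rfl⟩
    exact ⟨fun c => lam c, fun c => (lam c).2, rfl⟩

theorem exists_nsmul_mem_span_nat {M : Type*} [AddCommGroup M] [Module ℚ M] {s : Set M} {x : M}
    (hx : x ∈ PointedCone.hull ℚ s) : ∃ N : ℕ, N ≠ 0 ∧ N • x ∈ Submodule.span ℕ s := by
  induction hx using Submodule.span_induction with
  | mem x hx => exact ⟨1, one_ne_zero, by simpa using Submodule.subset_span hx⟩
  | zero => exact ⟨1, one_ne_zero, by simp⟩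
  | add x y _ _ ihx ihy =>
    obtain ⟨N, hN, hx⟩ := ihx
    obtain ⟨N', hN', hy⟩ := ihy
    refine ⟨N * N', mul_ne_zero hN hN', ?_⟩
    rw [smul_add, mul_smul N N' y, mul_comm, mul_smul]
    exact add_mem (Submodule.smul_mem _ _ hx) (Submodule.smul_mem _ _ hy)
  | smul c x _ ihx =>
    obtain ⟨N, hN, hx⟩ := ihx
    have den_smul : c.1.den • c.1 = c.1.num.toNat := by
      rw [nsmul_eq_mul, Rat.den_mul_eq_num, ← Int.cast_natCast,
        Int.toNat_of_nonneg (Rat.num_nonneg.mpr c.2)]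
    have smul_eq : (N * c.1.den) • c • x = c.1.num.toNat • N • x := calc
      (N * c.1.den) • c.1 • x = N • (c.1.den • c.1) • x := by rw [mul_smul, smul_assoc]
      _ = c.1.num.toNat • N • x := by rw [den_smul, Nat.cast_smul_eq_nsmul, smul_comm]
    refine ⟨N * c.1.den, mul_ne_zero hN c.1.den_ne_zero, ?_⟩
    rw [smul_eq]
    exact Submodule.smul_mem _ _ hx

theorem mem_of_nsmul_mem_pointedCone {M : Type*} [AddCommGroup M] [Module ℚ M]
    {P : PointedCone ℚ M} {N : ℕ} (hN : N ≠ 0) {x : M} (hx : N • x ∈ P) : x ∈ P := by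
  have smul_mem : (N : ℚ)⁻¹ • N • x ∈ P :=
    P.smul_mem (inv_nonneg.mpr N.cast_nonneg) hx
  rwa [← Nat.cast_smul_eq_nsmul ℚ, inv_smul_smul₀ (Nat.cast_ne_zero.mpr hN)] at smul_mem

end Cone

section NegGamma

variable {V A : Type} {t h : A → V} {i j k : V}

theorem IsPathFrom.append {p q : List A} (hp : IsPathFrom t h i p j)
    (hq : IsPathFrom t h j q k) : IsPathFrom t h i (p ++ q) k := by
  induction p generalizing i with
  | nil => obtain rfl : i = j := hp; exact hq
  | cons a p ih => exact ⟨hp.1, ih hp.2⟩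

theorem Acyclic.eq_of_isPathFrom (hQ : Acyclic t h) {p q : List A}
    (hp : IsPathFrom t h i p j) (hq : IsPathFrom t h j q i) : i = j := by
  obtain ⟨rfl, -⟩ := List.append_eq_nil_iff.mp (hQ i _ (hp.append hq))
  exact hp

theorem exists_isPathFrom_of_gammaRoot_ne_zero (hij : gammaRoot t h i j ≠ 0) :
    ∃ p, IsPathFrom t h i p j :=
  Set.nonempty_of_ncard_ne_zero hij

theorem Acyclic.gammaRoot_self (hQ : Acyclic t h) (i : V) : gammaRoot t h i i = 1 := by
  have paths : {p | IsPathFrom t h i p i} = {[]} :=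
    Set.eq_singleton_iff_unique_mem.mpr ⟨rfl, hQ i⟩
  rw [gammaRoot, paths, Set.ncard_singleton]

/-- The element `-γ_i` of `Ψ(Q)_{≥ -1}`. -/
def negGamma (t h : A → V) (i : V) : V → ℤ := fun v => -(gammaRoot t h i v : ℤ)

theorem Acyclic.negGamma_injective (hQ : Acyclic t h) :
    Function.Injective (negGamma t h) := by
  intro i j hij
  have gamma_eq (v : V) : gammaRoot t h i v = gammaRoot t h j v :=
    Int.ofNat_inj.mp (neg_injective (congrFun hij v))
  obtain ⟨p, hp⟩ := exists_isPathFrom_of_gammaRoot_ne_zero (t := t) (h := h) (i := i) (j := j)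
    (by simp [gamma_eq, hQ.gammaRoot_self])
  obtain ⟨q, hq⟩ := exists_isPathFrom_of_gammaRoot_ne_zero (t := t) (h := h) (i := j) (j := i)
    (by simp [← gamma_eq, hQ.gammaRoot_self])
  exact hQ.eq_of_isPathFrom hp hq

theorem Acyclic.natZ_ne_negGamma (hQ : Acyclic t h) (β : V → ℕ) (i : V) :
    natZ β ≠ negGamma t h i := by
  intro eq
  have eq_i : (β i : ℤ) = -(gammaRoot t h i i : ℤ) := congrFun eq i
  rw [hQ.gammaRoot_self] at eq_i
  lia

theorem isCompatible_of_coe_eq {K : Type} [Field K] (hQ : Acyclic t h) {B : Set (V → ℕ)}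
    {I : Set V} {C : Finset (V → ℤ)} (hC : (C : Set (V → ℤ)) = natZ '' B ∪ negGamma t h '' I)
    (hB : ∀ β ∈ B, isRealSchurRoot K t h β)
    (hext : ∀ β₁ ∈ B, ∀ β₂ ∈ B, extMin K t h β₁ β₂ = 0)
    (hzero : ∀ β ∈ B, ∀ i ∈ I, β i = 0) : IsCompatible K t h C := by
  have mem_iff (x : V → ℤ) : x ∈ C ↔ x ∈ natZ '' B ∪ negGamma t h '' I := by
    rw [← Finset.mem_coe, hC]
  have mem_of_natZ_mem {β : V → ℕ} (hβ : natZ β ∈ C) : β ∈ B := by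
    rcases (mem_iff _).mp hβ with hβ | ⟨i, -, hi⟩
    · exact natZ_injective.mem_set_image.mp hβ
    · exact absurd hi.symm (hQ.natZ_ne_negGamma β i)
  have mem_of_negGamma_mem {i : V} (hi : negGamma t h i ∈ C) : i ∈ I := by
    rcases (mem_iff _).mp hi with ⟨β, -, hβ⟩ | hi
    · exact absurd hβ (hQ.natZ_ne_negGamma β i)
    · exact hQ.negGamma_injective.mem_set_image.mp hi
  refine ⟨fun x hx => ?_, fun x hx y hy _ => ⟨?_, ?_⟩⟩
  · rcases (mem_iff x).mp hx with ⟨β, hβ, rfl⟩ | ⟨i, -, rfl⟩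
    · exact .inl ⟨β, hB β hβ, rfl⟩
    · exact .inr ⟨i, rfl⟩
  · rintro β₁ β₂ - - rfl rfl
    exact hext β₁ (mem_of_natZ_mem hx) β₂ (mem_of_natZ_mem hy)
  · rintro β i - rfl rfl
    exact hzero β (mem_of_natZ_mem hx) i (mem_of_negGamma_mem hy)

end NegGamma

theorem isRealSchurRoot.eulerForm_self {K : Type} [Field K] {V A : Type} [Fintype V] [Fintype A]
    {t h : A → V} {β : V → ℕ} (hβ : isRealSchurRoot K t h β) :
    eulerForm t h (natZ β) (natZ β) = 1 := by
  obtain ⟨X, rfl, hX⟩ := hβ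
  exact hX.eulerForm_self

/-- The real Schur roots which are nonnegative integral combinations of the family `b`. When `b`
consists of the dimension vectors of orthogonal bricks, they are the candidates for the
positive part of the compatible sets covering its cone. -/
def schurRootsOver (K : Type) [Field K] {V A ι : Type} [Fintype ι] (t h : A → V)
    (b : ι → V → ℕ) : Set (V → ℕ) :=
  {β | isRealSchurRoot K t h β ∧ ∃ n : ι → ℕ, β = ∑ j, n j • b j}

namespace QuivRep

section Decomposition

variable {K : Type} [Field K] {V A : Type} {t h : A → V} {ι : Type} [Fintype ι]
variable {E : ι → QuivRep K V A t h} {X : QuivRep K V A t h}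

theorem IsFiltered.exists_of_dimVec (E : ι → QuivRep K V A t h) (n : ι → ℕ) :
    ∃ X, IsFiltered E X ∧ X.dimVec = ∑ j, n j • (E j).dimVec := by
  let dims : AddSubmonoid (V → ℕ) :=
    { carrier := {d | ∃ X, IsFiltered E X ∧ X.dimVec = d}
      zero_mem' := ⟨⟨fun _ => PUnit, fun _ => 0⟩, .zero _ fun _ => inferInstanceAs
        (Subsingleton PUnit), funext fun _ => Module.finrank_zero_of_subsingleton⟩
      add_mem' := by
        rintro _ _ ⟨X, hX, rfl⟩ ⟨Z, hZ, rfl⟩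
        have S := shortExact_extensionOf (X := X) (Z := Z) fun _ => 0
        exact ⟨_, hZ.extension hX S, S.dimVec_eq⟩ }
  exact dims.sum_mem fun j _ => dims.nsmul_mem ⟨E j, .simple E j, rfl⟩ (n j)

variable [Fintype V] [Fintype A]

theorem IsFiltered.eulerForm_pos
    (hB : ∀ η, η ≠ 0 → 0 < titsBilin t h (fun j => (E j).dimVec) η η) (hX : IsFiltered E X)
    (hid : Hom.id X ≠ 0) : 0 < eulerForm t h (natZ X.dimVec) (natZ X.dimVec) := by
  obtain ⟨n, hn⟩ := hX.exists_dimVec_eq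
  have n_ne_zero : (fun j => (n j : ℚ)) ≠ 0 := fun h0 => by
    have n_eq (j) : n j = 0 := Nat.cast_eq_zero.mp (congrFun h0 j)
    exact hid (dimVec_eq_zero_iff.mp (by simp [hn, n_eq]))
  have pos := hB _ n_ne_zero
  rw [titsBilin_natCast, ← hn] at pos
  exact_mod_cast pos

theorem IsOrthogonalBricks.exists_decomposition [IsAlgClosed K] (hE : IsOrthogonalBricks E)
    (hB : ∀ η, η ≠ 0 → 0 < titsBilin t h (fun j => (E j).dimVec) η η) (n : ι → ℕ) :
    ∃ T : Multiset (V → ℕ), T.sum = ∑ j, n j • (E j).dimVec ∧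
      (∀ β ∈ T, β ∈ schurRootsOver K t h fun j => (E j).dimVec) ∧
      ∀ β₁ ∈ T, ∀ β₂ ∈ T, extMin K t h β₁ β₂ = 0 := by
  have hker : ClosedUnderKernels (IsFiltered E) := fun _ _ _ _ _ hX hY hi => hX.kernel hE hY hi
  have hexc (X) (hX : IsFiltered E X) (hind : X.IsIndecomposable) : X.IsExceptional :=
    hind.isExceptional hker (fun _ => IsFiltered.eulerForm_pos hB) hX
  obtain ⟨M, hM, hdimM⟩ := IsFiltered.exists_of_dimVec E n
  obtain ⟨X, hX, hdimX, hrigid⟩ := ClosedUnderExtensions.exists_isRigid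
    (fun _ _ _ _ _ hX hZ S => hZ.extension hX S) hker
    (fun X hX hind => (hexc X hX hind).1) hM
  obtain ⟨L, hsum, hL⟩ := hker.exists_indecomposable_summands hX
  refine ⟨L.map dimVec, by rw [hsum, hdimX, hdimM], fun β hβ => ?_, fun β₁ hβ₁ β₂ hβ₂ => ?_⟩
  · obtain ⟨Z, hZL, rfl⟩ := Multiset.mem_map.mp hβ
    obtain ⟨hZ, hind, -⟩ := hL Z hZL
    exact ⟨⟨Z, rfl, hexc Z hZ hind⟩, hZ.exists_dimVec_eq⟩
  · obtain ⟨Z₁, hZ₁, rfl⟩ := Multiset.mem_map.mp hβ₁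
    obtain ⟨Z₂, hZ₂, rfl⟩ := Multiset.mem_map.mp hβ₂
    obtain ⟨-, -, i₁, p₁, h₁⟩ := hL Z₁ hZ₁
    obtain ⟨-, -, i₂, p₂, h₂⟩ := hL Z₂ hZ₂
    exact Nat.le_zero.mp <|
      (extMin_le_extDim Z₁ Z₂).trans_eq (hrigid.extDim_eq_zero_of_comp_eq_id h₁ h₂)

end Decomposition

end QuivRep

section Covering

variable {K : Type} [Field K] {V A : Type} {t h : A → V} {ι : Type} [Fintype ι]
variable {b : ι → V → ℕ}

theorem finite_schurRootsOver [Fintype V] [Fintype A]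
    (hB : ∀ η, η ≠ 0 → 0 < titsBilin t h b η η) : (schurRootsOver K t h b).Finite := by
  refine ((finite_setOf_natCast_apply_self_le hB 1).image fun n => ∑ j, n j • b j).subset ?_
  rintro _ ⟨hβ, n, rfl⟩
  refine ⟨n, ?_, rfl⟩
  rw [Set.mem_ofPred_eq, titsBilin_natCast, hβ.eulerForm_self, Int.cast_one]

theorem exists_nsmul_eq_intQ_natZ_sum {x : V → ℚ}
    (hx : x ∈ PointedCone.hull ℚ (Set.range fun j => intQ (natZ (b j)))) :
    ∃ N : ℕ, N ≠ 0 ∧ ∃ n : ι → ℕ, N • x = intQ (natZ (∑ j, n j • b j)) := by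
  obtain ⟨N, hN, hx⟩ := exists_nsmul_mem_span_nat hx
  obtain ⟨n, hn⟩ := (Submodule.mem_span_range_iff_exists_fun ℕ).mp hx
  refine ⟨N, hN, n, ?_⟩
  simp only [← hn, intQ_natZ_sum_nsmul, Nat.cast_smul_eq_nsmul]

theorem intQ_natZ_multisetSum_mem_hull (T : Multiset (V → ℕ)) :
    intQ (natZ T.sum) ∈ PointedCone.hull ℚ ((fun β => intQ (natZ β)) '' {β | β ∈ T}) := by
  let f : (V → ℕ) →+ (V → ℚ) :=
    { toFun := fun β => intQ (natZ β)
      map_zero' := by ext v; simp [intQ, natZ]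
      map_add' := fun x y => by ext v; simp [intQ, natZ] }
  change f T.sum ∈ _
  rw [map_multiset_sum]
  exact multiset_sum_mem _ fun x hx => PointedCone.subset_hull (Multiset.mem_map.mp hx)

end Covering

section Main

variable {K : Type} [Field K] {V A : Type} {t h : A → V}

variable (K t h) in
/-- The compatible sets all of whose elements belong to `R`. -/
def compatibleSubsets (R : Set (V → ℤ)) : Set (Finset (V → ℤ)) :=
  {C | IsCompatible K t h C ∧ (C : Set (V → ℤ)) ⊆ R}

theorem finite_compatibleSubsets {R : Set (V → ℤ)} (hR : R.Finite) :
    (compatibleSubsets K t h R).Finite :=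
  (hR.powerset.preimage Finset.coe_injective.injOn).subset fun _ hC => hC.2

theorem intQ_mem_coneOf {C : Finset (V → ℤ)} {c : V → ℤ} (hc : c ∈ C) : intQ c ∈ coneOf C := by
  rw [coneOf_eq_hull]
  exact PointedCone.subset_hull ⟨c, hc, rfl⟩

theorem coneOf_subset_coneOf {C D : Finset (V → ℤ)} (hCD : ∀ c ∈ C, intQ c ∈ coneOf D) :
    coneOf C ⊆ coneOf D := by
  simp only [coneOf_eq_hull, SetLike.mem_coe] at hCD ⊢
  exact Submodule.span_le.mpr (Set.image_subset_iff.mpr hCD)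

variable {ι : Type} [Fintype ι] {b : ι → V → ℕ} {I : Set V} {E : Finset (V → ℤ)}

theorem intQ_natZ_sum_mem_coneOf (hE : ∀ j, natZ (b j) ∈ E) (n : ι → ℕ) :
    intQ (natZ (∑ j, n j • b j)) ∈ coneOf E := by
  have hb (j) : intQ (natZ (b j)) ∈ coneOf E := intQ_mem_coneOf (hE j)
  simp only [coneOf_eq_hull, intQ_natZ_sum_nsmul, Nat.cast_smul_eq_nsmul, SetLike.mem_coe] at hb ⊢
  exact sum_mem fun j _ => nsmul_mem (hb j) (n j)

theorem exists_isCompatible_mem_coneOf (hQ : Acyclic t h)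
    (hdecomp : ∀ n : ι → ℕ, ∃ T : Multiset (V → ℕ), T.sum = ∑ j, n j • b j ∧
      (∀ β ∈ T, β ∈ schurRootsOver K t h b) ∧ ∀ β₁ ∈ T, ∀ β₂ ∈ T, extMin K t h β₁ β₂ = 0)
    (hzero : ∀ j, ∀ i ∈ I, b j i = 0)
    (hE : (E : Set (V → ℤ)) = Set.range (fun j => natZ (b j)) ∪ negGamma t h '' I) {x : V → ℚ}
    (hx : x ∈ coneOf E) : ∃ C ∈ compatibleSubsets K t h
      (natZ '' schurRootsOver K t h b ∪ negGamma t h '' I), x ∈ coneOf C := by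
  rw [coneOf_eq_hull, hE, Set.image_union, ← Set.range_comp', SetLike.mem_coe, PointedCone.hull,
    Submodule.span_union] at hx
  obtain ⟨y, hy, z, hz, rfl⟩ := Submodule.mem_sup.mp hx
  obtain ⟨N, hN, n, hn⟩ := exists_nsmul_eq_intQ_natZ_sum hy
  obtain ⟨T, hsum, hT, hext⟩ := hdecomp n
  have finite : (natZ '' {β | β ∈ T} ∪ negGamma t h '' I).Finite := by
    refine .union (T.finite_toSet.image _) (E.finite_toSet.subset ?_)
    exact hE ▸ Set.subset_union_right
  refine ⟨finite.toFinset, ⟨isCompatible_of_coe_eq hQ finite.coe_toFinset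
    (fun β hβ => (hT β hβ).1) hext fun β hβ i hi => ?_, ?_⟩, ?_⟩
  · obtain ⟨n, rfl⟩ := (hT β hβ).2
    simp [hzero _ i hi]
  · rw [finite.coe_toFinset]
    exact Set.union_subset_union_left _ (Set.image_mono hT)
  · rw [coneOf_eq_hull, finite.coe_toFinset, Set.image_union, PointedCone.hull,
      Submodule.span_union, Set.image_image]
    refine Submodule.add_mem_sup (mem_of_nsmul_mem_pointedCone hN ?_) hz
    rw [hn, ← hsum]
    exact intQ_natZ_multisetSum_mem_hull T

theorem coneOf_eq_iUnion_compatibleSubsets (hQ : Acyclic t h)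
    (hdecomp : ∀ n : ι → ℕ, ∃ T : Multiset (V → ℕ), T.sum = ∑ j, n j • b j ∧
      (∀ β ∈ T, β ∈ schurRootsOver K t h b) ∧ ∀ β₁ ∈ T, ∀ β₂ ∈ T, extMin K t h β₁ β₂ = 0)
    (hzero : ∀ j, ∀ i ∈ I, b j i = 0)
    (hE : (E : Set (V → ℤ)) = Set.range (fun j => natZ (b j)) ∪ negGamma t h '' I) :
    coneOf E = ⋃ C ∈ compatibleSubsets K t h
      (natZ '' schurRootsOver K t h b ∪ negGamma t h '' I), coneOf C := by
  refine Set.Subset.antisymm (fun x hx => ?_) (Set.iUnion₂_subset fun C hC => ?_)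
  · exact Set.mem_iUnion₂.mpr <| by
      simpa only [exists_prop] using exists_isCompatible_mem_coneOf hQ hdecomp hzero hE hx
  · refine coneOf_subset_coneOf fun c hc => ?_
    rcases hC.2 hc with ⟨_, ⟨-, n, rfl⟩, rfl⟩ | hc
    · exact intQ_natZ_sum_mem_coneOf (fun j => hE.ge (.inl ⟨j, rfl⟩)) n
    · exact intQ_mem_coneOf (hE.ge (.inr hc))

theorem stmt15_general [Fintype V] [Fintype A] [IsAlgClosed K] (hQ : Acyclic t h)
    (l m : ℕ) (b : Fin l → V → ℕ) (g : Fin m → V)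
    (hqes : IsQES K t h b) (hzero : ∀ j k, b j (g k) = 0)
    (E : Finset (V → ℤ))
    (hE : (E : Set (V → ℤ)) =
      (Set.range fun j => natZ (b j)) ∪
      (Set.range fun k => (fun v => -(gammaRoot t h (g k) v : ℤ))))
    (hposdef : ∀ η : Fin l → ℚ, η ≠ 0 →
      0 < (∑ i, η i ^ 2) + ∑ i, ∑ j,
        (if i = j then 0 else
          ((eulerForm t h (natZ (b i)) (natZ (b j)) : ℤ) : ℚ) * η i * η j)) :
    ∃ (r : ℕ) (C : Fin r → Finset (V → ℤ)),
      (∀ k, IsCompatible K t h (C k)) ∧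
      coneOf E = {x | ∃ k, x ∈ coneOf (C k)} := by
  have : Infinite K := IsAlgClosed.instInfinite
  obtain ⟨X, hdim, -, hX⟩ := hqes.exists_isOrthogonalBricks
  obtain rfl : (fun j => (X j).dimVec) = b := funext hdim
  have hB : ∀ η, η ≠ 0 → 0 < titsBilin t h (fun j => (X j).dimVec) η η := fun η hη => by
    rw [titsBilin_apply_self fun i => (hqes.1 i).eulerForm_self]
    exact hposdef η hη
  change _ = _ ∪ Set.range (negGamma t h ∘ g) at hE
  rw [Set.range_comp] at hE
  obtain ⟨r, C, -, hC⟩ := (finite_compatibleSubsets (K := K) (t := t) (h := h) <|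
    ((finite_schurRootsOver (K := K) hB).image natZ).union
      ((Set.finite_range g).image (negGamma t h))).fin_param
  refine ⟨r, C, fun k => (hC.le ⟨k, rfl⟩).1, ?_⟩
  rw [coneOf_eq_iUnion_compatibleSubsets hQ (hX.exists_decomposition hB)
    (fun j => Set.forall_mem_range.mpr (hzero j)) hE, ← hC, Set.biUnion_range]
  ext x
  simp

end Main

/-- If `𝓔` is a representation-finite quiver exceptional set (the Tits
form of its Ext-quiver `Q(𝓔)` is positive definite), then `Cone(𝓔)` is a finite union of
cones on compatible subsets of `Ψ(Q)_{≥ −1}`. -/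
theorem stmt15 [IsAlgClosed K] [CharZero K] (t h : A → V) (hQ : Acyclic t h)
    (l m : ℕ) (b : Fin l → V → ℕ) (g : Fin m → V)
    (hbinj : Function.Injective b) (hginj : Function.Injective g)
    (hqes : IsQES K t h b) (hzero : ∀ j k, b j (g k) = 0)
    (E : Finset (V → ℤ))
    (hE : (E : Set (V → ℤ)) =
      (Set.range fun j => natZ (b j)) ∪
      (Set.range fun k => (fun v => -(gammaRoot t h (g k) v : ℤ))))
    (hposdef : ∀ η : Fin l → ℚ, η ≠ 0 →
      0 < (∑ i, η i ^ 2) + ∑ i, ∑ j,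
        (if i = j then 0 else
          ((eulerForm t h (natZ (b i)) (natZ (b j)) : ℤ) : ℚ) * η i * η j)) :
    ∃ (r : ℕ) (C : Fin r → Finset (V → ℤ)),
      (∀ k, IsCompatible K t h (C k)) ∧
      coneOf E = {x | ∃ k, x ∈ coneOf (C k)} := by
  exact stmt15_general hQ l m b g hqes hzero E hE hposdef

end
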